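/- arXiv:1211.3442 — 2 statements merged into one kernel-verified Lean document; each statement's English description precedes it below -/
import Mathlib

section
/- For every positive integer n and every Ferrers board F in F_n, the number of 321-avoiding perfect matchings of shape F equals the number of Dyck paths of semilength n that lie weakly below the border path D_F of F. (In the paper this is realized by an explicit bijection Δ_321 : M_F(321) → D²_F.) -/
/-! ### Patterns of length 3 and 4 as permutations (0-indexed values) -/

def p123 : Equiv.Perm (Fin 3) :=
  ⟨![0,1,2], ![0,1,2], by intro x; fin_cases x <;> rfl, by intro x; fin_cases x <;> rfl⟩
def p132 : Equiv.Perm (Fin 3) :=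
  ⟨![0,2,1], ![0,2,1], by intro x; fin_cases x <;> rfl, by intro x; fin_cases x <;> rfl⟩
def p213 : Equiv.Perm (Fin 3) :=
  ⟨![1,0,2], ![1,0,2], by intro x; fin_cases x <;> rfl, by intro x; fin_cases x <;> rfl⟩
def p231 : Equiv.Perm (Fin 3) :=
  ⟨![1,2,0], ![2,0,1], by intro x; fin_cases x <;> rfl, by intro x; fin_cases x <;> rfl⟩
def p312 : Equiv.Perm (Fin 3) :=
  ⟨![2,0,1], ![1,2,0], by intro x; fin_cases x <;> rfl, by intro x; fin_cases x <;> rfl⟩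
def p321 : Equiv.Perm (Fin 3) :=
  ⟨![2,1,0], ![2,1,0], by intro x; fin_cases x <;> rfl, by intro x; fin_cases x <;> rfl⟩
def p1342 : Equiv.Perm (Fin 4) :=
  ⟨![0,2,3,1], ![0,3,1,2], by intro x; fin_cases x <;> rfl, by intro x; fin_cases x <;> rfl⟩
def p1324 : Equiv.Perm (Fin 4) :=
  ⟨![0,2,1,3], ![0,2,1,3], by intro x; fin_cases x <;> rfl, by intro x; fin_cases x <;> rfl⟩

/-! ### Perfect matchings of `[2n] = {1, …, 2n}` as finsets of pairs `(i,j)`, `i < j` -/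

/-- `M` is a perfect matching of `{1, …, 2n}`. -/
def IsPerfectMatching (n : ℕ) (M : Finset (ℕ × ℕ)) : Prop :=
  (∀ p ∈ M, p.1 < p.2 ∧ 1 ≤ p.1 ∧ p.2 ≤ 2 * n) ∧
  ∀ x, 1 ≤ x → x ≤ 2 * n → ∃! p, p ∈ M ∧ (p.1 = x ∨ p.2 = x)

/-- The matching `M` contains the pattern `τ ∈ S_k`: there are
`i_1 < i_2 < ⋯ < i_{2k}` with `(i_a, i_{2k+1-τ(a)}) ∈ M` for all `1 ≤ a ≤ k`
(written here 0-indexed). -/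
def MatchContains {k : ℕ} (τ : Equiv.Perm (Fin k)) (M : Finset (ℕ × ℕ)) : Prop :=
  ∃ f : Fin (2 * k) → ℕ, StrictMono f ∧
    ∀ a : Fin k,
      (f ⟨a.1, by have := a.isLt; omega⟩,
       f ⟨2 * k - 1 - (τ a).1, by have := (τ a).isLt; omega⟩) ∈ M

def MatchAvoids {k : ℕ} (τ : Equiv.Perm (Fin k)) (M : Finset (ℕ × ℕ)) : Prop :=
  ¬ MatchContains τ M

/-! ### Dyck paths as lists of booleans (`true` = east step, `false` = south step) -/

/-- A Dyck path of semilength `n`, from `(0,n)` to `(n,0)`, staying weakly above `y = n - x`. -/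
def IsDyckPath (n : ℕ) (t : List Bool) : Prop :=
  t.length = 2 * n ∧ t.count true = n ∧
  ∀ i, (t.take i).count false ≤ (t.take i).count true

/-- The height (distance above the diagonal) of the `i`-th vertex of the path `t`. -/
def pathHeight (t : List Bool) (i : ℕ) : ℤ :=
  ((t.take i).count true : ℤ) - ((t.take i).count false : ℤ)

/-- `s` lies weakly below `t` (for paths of the same semilength). -/
def WeaklyBelow (s t : List Bool) : Prop := ∀ i, pathHeight s i ≤ pathHeight t i

/-- The shape of a matching of `[2n]`: an east step for each opener, a south step for
each closer. -/
def shapeOf (n : ℕ) (M : Finset (ℕ × ℕ)) : List Bool :=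
  (List.range (2 * n)).map fun x => decide ((x + 1) ∈ M.image Prod.fst)

/-- Number of returns of a path: south steps ending on the diagonal. -/
def returnsOf (t : List Bool) : ℕ :=
  ((Finset.range t.length).filter fun i =>
    t[i]? = some false ∧ (t.take (i+1)).count true = (t.take (i+1)).count false).card

/-- Height sequence of a path, as natural numbers. -/
def hseq (t : List Bool) (i : ℕ) : ℕ := (t.take i).count true - (t.take i).count false

/-- `η(F)`: the number of indices `0 ≤ i ≤ 2n` with `h_i = 2`. -/
def etaOf (n : ℕ) (t : List Bool) : ℕ :=
  ((Finset.range (2 * n + 1)).filter fun i => hseq t i = 2).card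

/-! ### Full rook placements on Ferrers boards -/

/-- The square in column `c`, row `r` (both 1-indexed from the bottom left) belongs to the
Ferrers board with border path `t ∈ F_n`. -/
def InBoard (n : ℕ) (t : List Bool) (c r : ℕ) : Prop :=
  1 ≤ c ∧ 1 ≤ r ∧ ∃ i, c ≤ (t.take i).count true ∧ (t.take i).count false + r ≤ n

/-- `R` is a full rook placement on the Ferrers board with border path `t ∈ F_n`:
one rook in each of the `n` rows and `n` columns. -/
def IsFullRookPlacement (n : ℕ) (t : List Bool) (R : Finset (ℕ × ℕ)) : Prop :=
  (∀ p ∈ R, InBoard n t p.1 p.2) ∧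
  (∀ c, 1 ≤ c → c ≤ n → ∃! p, p ∈ R ∧ p.1 = c) ∧
  (∀ r, 1 ≤ r → r ≤ n → ∃! p, p ∈ R ∧ p.2 = r)

/-- The rooks of `R` lying in the rectangle `Γ(V_i)` determined by the `i`-th border vertex. -/
def rectRooks (n : ℕ) (t : List Bool) (R : Finset (ℕ × ℕ)) (i : ℕ) : Finset (ℕ × ℕ) :=
  R.filter fun p => p.1 ≤ (t.take i).count true ∧ p.2 + (t.take i).count false ≤ n

/-- Length of the longest increasing sequence (in both coordinates) in a finite point set. -/
def lisLen (S : Finset (ℕ × ℕ)) : ℕ :=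
  (S.powerset.filter fun T => ∀ p ∈ T, ∀ q ∈ T, p.1 < q.1 → p.2 < q.2).sup Finset.card

/-- The full rook placement `R` on the board with border `t ∈ F_n` contains the pattern `τ`:
some rectangle `Γ(V_i)` contains an occurrence of `τ`. -/
def PlacementContains {k : ℕ} (τ : Equiv.Perm (Fin k)) (n : ℕ) (t : List Bool)
    (R : Finset (ℕ × ℕ)) : Prop :=
  ∃ i ≤ 2 * n, ∃ f : Fin k → ℕ × ℕ,
    (∀ a, f a ∈ R ∧ (f a).1 ≤ (t.take i).count true ∧ (f a).2 + (t.take i).count false ≤ n) ∧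
    (∀ a b : Fin k, a < b → (f a).1 < (f b).1) ∧
    (∀ a b : Fin k, τ a < τ b → (f a).2 < (f b).2)

def PlacementAvoids {k : ℕ} (τ : Equiv.Perm (Fin k)) (n : ℕ) (t : List Bool)
    (R : Finset (ℕ × ℕ)) : Prop :=
  ¬ PlacementContains τ n t R

/-- `R` is board-minimal on the board with border `t`: every peak corner square holds a rook. -/
def BoardMinimal (n : ℕ) (t : List Bool) (R : Finset (ℕ × ℕ)) : Prop :=
  ∀ i, t[i]? = some true → t[i+1]? = some false →
    ((t.take (i+1)).count true, n - (t.take (i+1)).count false) ∈ R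

/-- Board-minimal full rook placements on boards of `F_n` avoiding the pattern `σ`,
recorded as pairs (border path, rook set). -/
def MinPlacements (n : ℕ) {k : ℕ} (σ : Equiv.Perm (Fin k)) :
    Set (List Bool × Finset (ℕ × ℕ)) :=
  {tR | IsDyckPath n tR.1 ∧ IsFullRookPlacement n tR.1 tR.2 ∧ BoardMinimal n tR.1 tR.2 ∧
        PlacementAvoids σ n tR.1 tR.2}

/-! ### Pattern avoidance in permutations -/

def PermContains {n k : ℕ} (τ : Equiv.Perm (Fin k)) (π : Equiv.Perm (Fin n)) : Prop :=
  ∃ f : Fin k → Fin n, StrictMono f ∧ ∀ a b : Fin k, τ a < τ b → π (f a) < π (f b)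

def PermAvoids {n k : ℕ} (τ : Equiv.Perm (Fin k)) (π : Equiv.Perm (Fin n)) : Prop :=
  ¬ PermContains τ π

/-- The full rook placement associated to a permutation of `[n]`. -/
def permPlacement {n : ℕ} (π : Equiv.Perm (Fin n)) : Finset (ℕ × ℕ) :=
  Finset.univ.image fun i : Fin n => ((i : ℕ) + 1, (π i : ℕ) + 1)

/-! ### Matchings with fixed points -/

/-- A (not necessarily perfect) matching on `{1, …, m}`: pairwise disjoint pairs. -/
def IsPartialMatching (m : ℕ) (M : Finset (ℕ × ℕ)) : Prop :=
  (∀ p ∈ M, p.1 < p.2 ∧ 1 ≤ p.1 ∧ p.2 ≤ m) ∧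
  ∀ p ∈ M, ∀ q ∈ M, p ≠ q → p.1 ≠ q.1 ∧ p.1 ≠ q.2 ∧ p.2 ≠ q.1 ∧ p.2 ≠ q.2

/-- The fixed points (unmatched vertices) of a matching on `{1, …, m}`. -/
def fixedPts (m : ℕ) (M : Finset (ℕ × ℕ)) : Finset ℕ :=
  (Finset.Icc 1 m).filter fun x => ∀ p ∈ M, p.1 ≠ x ∧ p.2 ≠ x

/-- The matched vertices of a matching on `{1, …, m}`. -/
def matchedSet (m : ℕ) (M : Finset (ℕ × ℕ)) : Finset ℕ :=
  (Finset.Icc 1 m).filter fun x => ∃ p ∈ M, p.1 = x ∨ p.2 = x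

/-- The rank (1-based) of `x` inside the finset `S`. -/
def rankIn (S : Finset ℕ) (x : ℕ) : ℕ := (S.filter (· ≤ x)).card

/-- The matching obtained by removing the fixed points and relabeling increasingly. -/
def relabeled (m : ℕ) (M : Finset (ℕ × ℕ)) : Finset (ℕ × ℕ) :=
  M.image fun p => (rankIn (matchedSet m M) p.1, rankIn (matchedSet m M) p.2)

/-! ### Set partitions -/

/-- `(i,j)` is an arc of the set partition `P` of `{1, …, n}`: `i < j` lie in a common block
with no element of that block strictly between them. -/
def PartArc {n : ℕ} (P : Finpartition (Finset.Icc 1 n)) (i j : ℕ) : Prop :=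
  i < j ∧ ∃ B ∈ P.parts, i ∈ B ∧ j ∈ B ∧ ∀ x ∈ B, ¬(i < x ∧ x < j)

/-- The set partition `P` contains the pattern `τ ∈ S_k`. -/
def PartContains {k n : ℕ} (τ : Equiv.Perm (Fin k)) (P : Finpartition (Finset.Icc 1 n)) : Prop :=
  ∃ f : Fin (2 * k) → ℕ, StrictMono f ∧
    ∀ a : Fin k,
      PartArc P (f ⟨a.1, by have := a.isLt; omega⟩)
        (f ⟨2 * k - 1 - (τ a).1, by have := (τ a).isLt; omega⟩)

def PartAvoids {k n : ℕ} (τ : Equiv.Perm (Fin k)) (P : Finpartition (Finset.Icc 1 n)) : Prop :=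
  ¬ PartContains τ P

/-! ### Counting functions -/

/-- `|M_n(τ)|`: the number of `τ`-avoiding perfect matchings of `[2n]`. -/
noncomputable def mcount {k : ℕ} (τ : Equiv.Perm (Fin k)) (n : ℕ) : ℕ :=
  {M : Finset (ℕ × ℕ) | IsPerfectMatching n M ∧ MatchAvoids τ M}.ncard

/-- `|M_n(σ,τ)|`: the number of perfect matchings of `[2n]` avoiding both `σ` and `τ`. -/
noncomputable def mcount2 {k : ℕ} (σ τ : Equiv.Perm (Fin k)) (n : ℕ) : ℕ :=
  {M : Finset (ℕ × ℕ) | IsPerfectMatching n M ∧ MatchAvoids σ M ∧ MatchAvoids τ M}.ncard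

/-- `|P_n(τ)|`: the number of `τ`-avoiding set partitions of `[n]`. -/
noncomputable def pcount {k : ℕ} (τ : Equiv.Perm (Fin k)) (n : ℕ) : ℕ :=
  Nat.card {P : Finpartition (Finset.Icc 1 n) // PartAvoids τ P}

/-- `|P_n(σ,τ)|`: the number of set partitions of `[n]` avoiding both `σ` and `τ`. -/
noncomputable def pcount2 {k : ℕ} (σ τ : Equiv.Perm (Fin k)) (n : ℕ) : ℕ :=
  Nat.card {P : Finpartition (Finset.Icc 1 n) // PartAvoids σ P ∧ PartAvoids τ P}

/-- `|S_n(τ)|`: the number of `τ`-avoiding permutations of `[n]`. -/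
noncomputable def scount {k : ℕ} (τ : Equiv.Perm (Fin k)) (n : ℕ) : ℕ :=
  Nat.card {π : Equiv.Perm (Fin n) // PermAvoids τ π}

/-!
A matching avoids `321` exactly when no three of its arcs cross pairwise. Read such a matching from
right to left, starting from the empty tableau: at a closer, row-insert the corresponding opener; at
an opener, remove it from the tableau, of which it is the largest entry. Since three pairwise
crossing arcs are what would make an insertion bump an entry out of the second row, all tableaux
have at most two rows. The number of cells at a position is the height of the border path there, and
the difference of the row lengths is the height of a second path, which is nonnegative and lies
below the border path because `0 ≤ a - b ≤ a + b` for row lengths `b ≤ a`.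

Conversely, two paths determine the matching. Reading them from left to right, an east step of the
border path places the current position at the end of the row chosen by the lower path, and a south
step reverses a row insertion whose new cell lies in the row prescribed by the lower path. The
nonnegativity of the lower path is what keeps the filling a standard tableau.
-/

/-! ### Two-row arrays and row insertion -/

/-- The number of elements of `S` smaller than `N`. -/
def countBelow (S : Finset ℕ) (N : ℕ) : ℕ := (S.filter (· < N)).card

theorem countBelow_insert {S : Finset ℕ} {a : ℕ} (ha : a ∉ S) (N : ℕ) :
    countBelow (insert a S) N = countBelow S N + if a < N then 1 else 0 := by
  unfold countBelow
  rw [Finset.filter_insert]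
  split_ifs
  · exact Finset.card_insert_of_notMem (by simp [ha])
  · rfl

theorem countBelow_mono (S : Finset ℕ) : Monotone (countBelow S) := fun _ _ h =>
  Finset.card_le_card <| Finset.monotone_filter_right S fun _ _ ha => lt_of_lt_of_le ha h

theorem countBelow_le_card (S : Finset ℕ) (N : ℕ) : countBelow S N ≤ S.card :=
  Finset.card_filter_le S _

theorem countBelow_eq_card {S : Finset ℕ} {N : ℕ} (h : ∀ a ∈ S, a < N) :
    countBelow S N = S.card := by
  rw [countBelow, Finset.filter_true_of_mem h]

theorem countBelow_congr {S : Finset ℕ} {N N' : ℕ} (h : ∀ a ∈ S, a < N ↔ a < N') :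
    countBelow S N = countBelow S N' := by
  rw [countBelow, countBelow, Finset.filter_congr h]

theorem countBelow_pos {S : Finset ℕ} {N : ℕ} : 0 < countBelow S N ↔ ∃ a ∈ S, a < N := by
  simp [countBelow, Finset.card_pos, Finset.filter_nonempty_iff]

/-- `1` for an east step and `-1` for a south step: the change in height along the step. -/
def stepSign (b : Bool) : ℤ := if b then 1 else -1

theorem stepSign_true : stepSign true = 1 := rfl

theorem stepSign_false : stepSign false = -1 := rfl

/-- A filling with two rows, each row being recorded by the set of its entries. It is a standard
Young tableau (on its set of entries) when it satisfies `TwoRows.IsTableau`. -/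
structure TwoRows where
  top : Finset ℕ
  bottom : Finset ℕ

namespace TwoRows

/-- The set of all entries of the two rows. -/
def entries (T : TwoRows) : Finset ℕ := T.top ∪ T.bottom

/-- The number of cells, as an integer. -/
def size (T : TwoRows) : ℤ := T.top.card + T.bottom.card

/-- The difference between the lengths of the two rows. -/
def excess (T : TwoRows) : ℤ := T.top.card - T.bottom.card

/-- Standardness of a two-row filling. Increasing columns are expressed by the ballot condition:
every initial segment of `ℕ` contains at least as many top entries as bottom entries. -/
structure IsTableau (T : TwoRows) : Prop where
  disjoint : Disjoint T.top T.bottom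
  ballot : ∀ N, countBelow T.bottom N ≤ countBelow T.top N

/-- Some top entry is smaller than some bottom entry, both lying strictly between `v` and `N`.
This is the trace in the tableau of two crossing arcs, see `ArcScan.hasCrossing_iff`. -/
def HasCrossing (T : TwoRows) (v N : ℕ) : Prop :=
  ∃ y ∈ T.top, ∃ z ∈ T.bottom, v < y ∧ y < z ∧ z < N

/-- Append `j` to the top row if `b` is `true`, and to the bottom row otherwise. -/
def push (T : TwoRows) (j : ℕ) : Bool → TwoRows
  | true => ⟨insert j T.top, T.bottom⟩
  | false => ⟨T.top, insert j T.bottom⟩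

/-- `T.Inserts x b T'` states that Schensted row insertion of `x` into `T` produces `T'` without
creating a third row. The bit `b` tells whether `x` bumps an entry `y` of the top row, in which
case `y` is appended to the bottom row. -/
inductive Inserts (x : ℕ) : Bool → TwoRows → TwoRows → Prop
  | append {A B : Finset ℕ} (hA : ∀ a ∈ A, a < x) (hxB : x ∉ B) :
      Inserts x false ⟨A, B⟩ ⟨insert x A, B⟩
  | bump {A B : Finset ℕ} {y : ℕ} (hxy : x < y) (hA : ∀ a ∈ A, a < x ∨ y < a)
      (hB : ∀ b ∈ B, b < y) (hxB : x ∉ B) :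
      Inserts x true ⟨insert y A, B⟩ ⟨insert x A, insert y B⟩

theorem isTableau_empty : IsTableau ⟨∅, ∅⟩ := ⟨Finset.disjoint_empty_left _, fun _ => le_rfl⟩

theorem eq_empty_of_entries_eq_empty {T : TwoRows} (h : T.entries = ∅) : T = ⟨∅, ∅⟩ := by
  obtain ⟨A, B⟩ := T
  obtain ⟨rfl, rfl⟩ := Finset.union_eq_empty.1 h
  rfl

theorem eq_empty_of_size_eq_zero {T : TwoRows} (h : T.size = 0) : T = ⟨∅, ∅⟩ := by
  obtain ⟨A, B⟩ := T
  simp only [size] at h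
  obtain rfl : A = ∅ := Finset.card_eq_zero.1 (by omega)
  obtain rfl : B = ∅ := Finset.card_eq_zero.1 (by omega)
  rfl

theorem excess_le_size (T : TwoRows) : T.excess ≤ T.size := by
  simp only [excess, size]
  omega

theorem IsTableau.card_bottom_le {T : TwoRows} (hT : T.IsTableau) :
    T.bottom.card ≤ T.top.card := by
  obtain ⟨N, hN⟩ := T.bottom.exists_nat_subset_range
  rw [← countBelow_eq_card fun a ha => Finset.mem_range.1 (hN ha)]
  exact (hT.ballot N).trans (countBelow_le_card _ _)

theorem IsTableau.excess_nonneg {T : TwoRows} (hT : T.IsTableau) : 0 ≤ T.excess := by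
  have := hT.card_bottom_le
  simp only [excess]
  omega

section Push

variable {T : TwoRows} {j : ℕ} {b : Bool}

theorem entries_push : (T.push j b).entries = insert j T.entries := by
  cases b
  · exact Finset.union_insert _ _ _
  · exact Finset.insert_union _ _ _

theorem size_push (hj : j ∉ T.entries) : (T.push j b).size = T.size + stepSign true := by
  obtain ⟨hjA, hjB⟩ := Finset.notMem_union.1 hj
  cases b
  · simp only [push, size, stepSign_true, Finset.card_insert_of_notMem hjB]
    omega
  · simp only [push, size, stepSign_true, Finset.card_insert_of_notMem hjA]
    omega

theorem excess_push (hj : j ∉ T.entries) : (T.push j b).excess = T.excess + stepSign b := by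
  obtain ⟨hjA, hjB⟩ := Finset.notMem_union.1 hj
  cases b
  · simp only [push, excess, stepSign_false, Finset.card_insert_of_notMem hjB]
    omega
  · simp only [push, excess, stepSign_true, Finset.card_insert_of_notMem hjA]
    omega

theorem push_inj {T₁ T₂ : TwoRows} {b₁ b₂ : Bool} (h₁ : j ∉ T₁.entries) (h₂ : j ∉ T₂.entries)
    (h : T₁.push j b₁ = T₂.push j b₂) : T₁ = T₂ ∧ b₁ = b₂ := by
  obtain ⟨A₁, B₁⟩ := T₁
  obtain ⟨A₂, B₂⟩ := T₂
  obtain ⟨hA₁, hB₁⟩ := Finset.notMem_union.1 h₁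
  obtain ⟨hA₂, hB₂⟩ := Finset.notMem_union.1 h₂
  cases b₁ <;> cases b₂ <;> obtain ⟨hA, hB⟩ := TwoRows.mk.inj h
  · exact ⟨congrArg₂ mk hA (Finset.insert_erase_invOn.2.injOn hB₁ hB₂ hB), rfl⟩
  · exact (hA₁ (hA ▸ Finset.mem_insert_self j A₂)).elim
  · exact (hA₂ (hA ▸ Finset.mem_insert_self j A₁)).elim
  · exact ⟨congrArg₂ mk (Finset.insert_erase_invOn.2.injOn hA₁ hA₂ hA) hB, rfl⟩

theorem exists_eq_push (hT : Disjoint T.top T.bottom) (hj : j ∈ T.entries) :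
    ∃ T' b, j ∉ entries T' ∧ T = push T' j b := by
  obtain ⟨A, B⟩ := T
  rcases Finset.mem_union.1 hj with hjA | hjB
  · have hjB := Finset.disjoint_left.1 hT hjA
    exact ⟨⟨A.erase j, B⟩, true, Finset.notMem_union.2 ⟨Finset.notMem_erase j A, hjB⟩,
      congrArg (mk · B) (Finset.insert_erase hjA).symm⟩
  · have hjA := Finset.disjoint_right.1 hT hjB
    exact ⟨⟨A, B.erase j⟩, false, Finset.notMem_union.2 ⟨hjA, Finset.notMem_erase j B⟩,
      congrArg (mk A) (Finset.insert_erase hjB).symm⟩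

theorem IsTableau.of_push (hT : (T.push j b).IsTableau) (hlt : ∀ v ∈ T.entries, v < j) :
    T.IsTableau := by
  obtain ⟨A, B⟩ := T
  simp only [entries, Finset.mem_union, or_imp, forall_and] at hlt
  obtain ⟨hA, hB⟩ := hlt
  obtain ⟨hdisj, hbal⟩ := hT
  cases b
  · refine ⟨(Finset.disjoint_insert_right.1 hdisj).2, fun N => le_trans ?_ (hbal N)⟩
    exact Finset.card_le_card (Finset.filter_subset_filter _ (Finset.subset_insert j B))
  · refine ⟨(Finset.disjoint_insert_left.1 hdisj).2, fun N => ?_⟩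
    have hmin : countBelow B N = countBelow B (min N j) :=
      countBelow_congr fun b hb => by have := hB b hb; omega
    have hj := hbal (min N j)
    simp only [push, countBelow_insert fun h => (hA j h).false] at hj
    rw [if_neg (min_le_right N j).not_gt, ← hmin] at hj
    exact hj.trans (countBelow_mono A (min_le_left N j))

theorem IsTableau.push (hT : T.IsTableau) (hlt : ∀ v ∈ T.entries, v < j)
    (hnonneg : 0 ≤ T.excess + stepSign b) : (T.push j b).IsTableau := by
  obtain ⟨A, B⟩ := T
  simp only [entries, Finset.mem_union, or_imp, forall_and] at hlt
  obtain ⟨hA, hB⟩ := hlt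
  have hjA : j ∉ A := fun h => (hA j h).false
  have hjB : j ∉ B := fun h => (hB j h).false
  obtain ⟨hdisj, hbal⟩ := hT
  cases b
  · refine ⟨Finset.disjoint_insert_right.2 ⟨hjA, hdisj⟩, fun N => ?_⟩
    simp only [TwoRows.push, countBelow_insert hjB]
    simp only [excess, stepSign_false] at hnonneg
    have := hbal N
    split_ifs with hN
    · have := countBelow_le_card B N
      rw [countBelow_eq_card fun a ha => (hA a ha).trans hN]
      omega
    · exact this
  · refine ⟨Finset.disjoint_insert_left.2 ⟨hjB, hdisj⟩, fun N => (hbal N).trans ?_⟩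
    exact Finset.card_le_card (Finset.filter_subset_filter _ (Finset.subset_insert j A))

theorem hasCrossing_push_iff {v N : ℕ} (hN : N ≤ j) :
    (T.push j b).HasCrossing v N ↔ T.HasCrossing v N := by
  cases b <;> simp only [push, HasCrossing, Finset.mem_insert] <;> grind

end Push

namespace Inserts

variable {x : ℕ} {b : Bool} {T T' : TwoRows}

theorem notMem_of_gap {A : Finset ℕ} {y : ℕ} (hxy : x < y) (hA : ∀ a ∈ A, a < x ∨ y < a) :
    x ∉ A ∧ y ∉ A :=
  ⟨fun hx => by have := hA x hx; omega, fun hy => by have := hA y hy; omega⟩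

theorem notMem_entries (h : T.Inserts x b T') : x ∉ T.entries := by
  cases h with
  | append hA hxB => exact Finset.notMem_union.2 ⟨fun hx => (hA x hx).false, hxB⟩
  | bump hxy hA hB hxB =>
    simp only [entries, Finset.mem_union, Finset.mem_insert]
    rintro ((rfl | hx) | hx)
    · exact hxy.false
    · exact (notMem_of_gap hxy hA).1 hx
    · exact hxB hx

theorem entries_eq (h : T.Inserts x b T') : T'.entries = insert x T.entries := by
  cases h with
  | append => exact Finset.insert_union _ _ _
  | bump =>
    ext v
    simp only [entries, Finset.mem_union, Finset.mem_insert]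
    tauto

theorem size_eq (h : T.Inserts x b T') : T.size = T'.size + stepSign false := by
  cases h with
  | append hA =>
    simp only [size, stepSign_false, Finset.card_insert_of_notMem fun hx => (hA x hx).false]
    omega
  | @bump A B y hxy hA hB =>
    obtain ⟨hxA, hyA⟩ := notMem_of_gap hxy hA
    simp only [size, stepSign_false, Finset.card_insert_of_notMem hxA,
      Finset.card_insert_of_notMem hyA, Finset.card_insert_of_notMem fun hy => (hB y hy).false]
    omega

theorem excess_eq (h : T.Inserts x b T') : T.excess = T'.excess + stepSign b := by
  cases h with
  | append hA =>
    simp only [excess, stepSign_false, Finset.card_insert_of_notMem fun hx => (hA x hx).false]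
    omega
  | @bump A B y hxy hA hB =>
    obtain ⟨hxA, hyA⟩ := notMem_of_gap hxy hA
    simp only [excess, stepSign_true, Finset.card_insert_of_notMem hxA,
      Finset.card_insert_of_notMem hyA, Finset.card_insert_of_notMem fun hy => (hB y hy).false]
    omega

theorem eq_of_append (h : T.Inserts x false T') :
    (∀ a ∈ T.top, a < x) ∧ T' = ⟨insert x T.top, T.bottom⟩ := by
  cases h with
  | append hA => exact ⟨hA, rfl⟩

theorem eq_of_bump (h : T.Inserts x true T') :
    ∃ y, IsLeast {a | a ∈ T.top ∧ x < a} y ∧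
      T' = ⟨insert x (T.top.erase y), insert y T.bottom⟩ := by
  cases h with
  | @bump A B y hxy hA hB =>
    have hyA := (notMem_of_gap hxy hA).2
    refine ⟨y, ⟨⟨Finset.mem_insert_self y A, hxy⟩, ?_⟩, by simp [Finset.erase_insert hyA]⟩
    rintro a ⟨ha, hxa⟩
    rcases Finset.mem_insert.1 ha with rfl | ha
    · exact le_rfl
    · have := hA a ha
      omega

theorem right_unique {b₁ b₂ : Bool} {T₁ T₂ : TwoRows} (h₁ : T.Inserts x b₁ T₁)
    (h₂ : T.Inserts x b₂ T₂) : b₁ = b₂ ∧ T₁ = T₂ := by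
  have not_both {T₁ T₂ : TwoRows} (h₁ : T.Inserts x false T₁) (h₂ : T.Inserts x true T₂) :
      False := by
    obtain ⟨y, hy, -⟩ := h₂.eq_of_bump
    exact (h₁.eq_of_append.1 y hy.1.1).asymm hy.1.2
  cases b₁ <;> cases b₂
  · exact ⟨rfl, h₁.eq_of_append.2.trans h₂.eq_of_append.2.symm⟩
  · exact (not_both h₁ h₂).elim
  · exact (not_both h₂ h₁).elim
  · obtain ⟨y₁, hy₁, rfl⟩ := h₁.eq_of_bump
    obtain ⟨y₂, hy₂, rfl⟩ := h₂.eq_of_bump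
    simp [hy₁.unique hy₂]

theorem eq_reverse_append (h : T.Inserts x false T') :
    IsGreatest (T'.top : Set ℕ) x ∧ T = ⟨T'.top.erase x, T'.bottom⟩ := by
  cases h with
  | append hA =>
    refine ⟨⟨by simp, fun a ha => ?_⟩, by
      simp [Finset.erase_insert fun hx => (hA x hx).false]⟩
    rcases Finset.mem_insert.1 ha with rfl | ha
    · exact le_rfl
    · exact (hA a ha).le

theorem eq_reverse_bump (h : T.Inserts x true T') :
    ∃ y, IsGreatest (T'.bottom : Set ℕ) y ∧ IsGreatest {a | a ∈ T'.top ∧ a < y} x ∧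
      T = ⟨insert y (T'.top.erase x), T'.bottom.erase y⟩ := by
  cases h with
  | @bump A B y hxy hA hB =>
    have hxA := (notMem_of_gap hxy hA).1
    refine ⟨y, ⟨by simp, fun b hb => ?_⟩, ⟨⟨by simp, hxy⟩, ?_⟩, by
      simp [Finset.erase_insert hxA, Finset.erase_insert fun hy => (hB y hy).false]⟩
    · rcases Finset.mem_insert.1 hb with rfl | hb
      · exact le_rfl
      · exact (hB b hb).le
    · rintro a ⟨ha, hay⟩
      rcases Finset.mem_insert.1 ha with rfl | ha
      · exact le_rfl
      · have := hA a ha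
        omega

theorem left_unique {x₁ x₂ : ℕ} {T₁ T₂ : TwoRows} (h₁ : T₁.Inserts x₁ b T)
    (h₂ : T₂.Inserts x₂ b T) : x₁ = x₂ ∧ T₁ = T₂ := by
  cases b
  · obtain ⟨hx₁, rfl⟩ := h₁.eq_reverse_append
    obtain ⟨hx₂, rfl⟩ := h₂.eq_reverse_append
    simp [hx₁.unique hx₂]
  · obtain ⟨y₁, hy₁, hx₁, rfl⟩ := h₁.eq_reverse_bump
    obtain ⟨y₂, hy₂, hx₂, rfl⟩ := h₂.eq_reverse_bump
    obtain rfl := hy₁.unique hy₂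
    simp [hx₁.unique hx₂]

theorem not_hasCrossing (h : T.Inserts x b T') (N : ℕ) : ¬ T.HasCrossing x N := by
  rintro ⟨y, hy, z, hz, hxy, hyz, -⟩
  cases h with
  | append hA => exact (hA y hy).asymm hxy
  | @bump A B w hxw hA hB =>
    have := hB z hz
    rcases Finset.mem_insert.1 hy with rfl | hy
    · omega
    · have := hA y hy
      omega

theorem hasCrossing_iff (h : T.Inserts x b T') {v N : ℕ} :
    T'.HasCrossing v N ↔ T.HasCrossing v N ∨ v < x ∧ ∃ z ∈ T.entries, x < z ∧ z < N := by
  cases h with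
  | @append A B hA =>
    constructor
    · rintro ⟨p, hp, q, hq, hvp, hpq, hqN⟩
      rcases Finset.mem_insert.1 hp with rfl | hp
      · exact .inr ⟨hvp, q, Finset.mem_union_right _ hq, hpq, hqN⟩
      · exact .inl ⟨p, hp, q, hq, hvp, hpq, hqN⟩
    · rintro (⟨p, hp, q, hq, hlt⟩ | ⟨hvx, z, hz, hxz, hzN⟩)
      · exact ⟨p, Finset.mem_insert_of_mem hp, q, hq, hlt⟩
      · have hzB : z ∈ B := (Finset.mem_union.1 hz).resolve_left fun hz => (hA z hz).asymm hxz
        exact ⟨x, Finset.mem_insert_self x A, z, hzB, hvx, hxz, hzN⟩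
  | @bump A B y hxy hA hB =>
    simp only [HasCrossing, entries, Finset.mem_union, Finset.mem_insert]
    constructor
    · rintro ⟨p, rfl | hp, q, rfl | hq, hvp, hpq, hqN⟩
      · exact .inr ⟨hvp, q, .inl (.inl rfl), hxy, hqN⟩
      · exact .inr ⟨hvp, q, .inr hq, hpq, hqN⟩
      · have := hA p hp
        exact .inr ⟨by omega, q, .inl (.inl rfl), hxy, hqN⟩
      · exact .inl ⟨p, .inr hp, q, hq, hvp, hpq, hqN⟩
    · rintro (⟨p, rfl | hp, q, hq, hvp, hpq, hqN⟩ | ⟨hvx, z, (rfl | hz) | hz, hxz, hzN⟩)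
      · exact ((hB q hq).asymm hpq).elim
      · exact ⟨p, .inr hp, q, .inr hq, hvp, hpq, hqN⟩
      · exact ⟨x, .inl rfl, z, .inl rfl, hvx, hxz, hzN⟩
      · have := hA z hz
        exact ⟨x, .inl rfl, y, .inl rfl, hvx, hxy, by omega⟩
      · exact ⟨x, .inl rfl, z, .inr hz, hvx, hxz, hzN⟩

theorem isTableau (h : T.Inserts x b T') (hT : T.IsTableau) : T'.IsTableau := by
  obtain ⟨hdisj, hbal⟩ := hT
  cases h with
  | append hA hxB =>
    refine ⟨Finset.disjoint_insert_left.2 ⟨hxB, hdisj⟩, fun N => (hbal N).trans ?_⟩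
    exact Finset.card_le_card (Finset.filter_subset_filter _ (Finset.subset_insert x _))
  | @bump A B y hxy hA hB hxB =>
    obtain ⟨hxA, hyA⟩ := notMem_of_gap hxy hA
    refine ⟨by simp_all [hxy.ne'], fun N => ?_⟩
    have hN := hbal N
    have hy := hbal y
    simp only [countBelow_insert hyA, countBelow_insert hxA,
      countBelow_insert fun hy => (hB y hy).false] at hN hy ⊢
    rw [countBelow_eq_card hB, if_neg y.lt_irrefl] at hy
    rcases le_or_gt N y with hNy | hyN
    · rw [if_neg hNy.not_gt] at hN ⊢
      omega
    · have := countBelow_le_card B N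
      have := countBelow_mono A hyN.le
      rw [if_pos hyN, if_pos (hxy.trans hyN)]
      omega

theorem isTableau_of_card (h : T.Inserts x b T') (hT' : T'.IsTableau)
    (hcard : T.bottom.card ≤ T.top.card) : T.IsTableau := by
  obtain ⟨hdisj, hbal⟩ := hT'
  cases h with
  | @append A B hA hxB =>
    refine ⟨(Finset.disjoint_insert_left.1 hdisj).2, fun N => ?_⟩
    have hN := hbal N
    rw [countBelow_insert fun hx => (hA x hx).false] at hN
    rcases le_or_gt N x with hNx | hxN
    · rwa [if_neg hNx.not_gt] at hN
    · change countBelow B N ≤ countBelow A N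
      rw [countBelow_eq_card fun a ha => (hA a ha).trans hxN]
      exact (countBelow_le_card B N).trans hcard
  | @bump A B y hxy hA hB hxB =>
    obtain ⟨hxA, hyA⟩ := notMem_of_gap hxy hA
    have hyB : y ∉ B := fun hy => (hB y hy).false
    refine ⟨by simp_all, fun N => ?_⟩
    have hN := hbal N
    have hy := hbal (y + 1)
    simp only [countBelow_insert hyA, countBelow_insert hxA, countBelow_insert hyB] at hN hy ⊢
    by_cases hmid : x < N ∧ N ≤ y
    · have := countBelow_mono B (show N ≤ y + 1 by omega)
      have : countBelow A N = countBelow A (y + 1) :=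
        countBelow_congr fun a ha => by have := hA a ha; omega
      rw [if_pos y.lt_succ_self, if_pos (by omega)] at hy
      omega
    · split_ifs at hN ⊢ <;> omega

end Inserts

theorem exists_inserts_of_not_hasCrossing {T : TwoRows} (hT : Disjoint T.top T.bottom) {x j : ℕ}
    (hx : x ∉ T.entries) (hlt : ∀ v ∈ T.entries, v < j) (hcross : ¬ T.HasCrossing x j) :
    ∃ b T', T.Inserts x b T' := by
  obtain ⟨A, B⟩ := T
  obtain ⟨hxA, hxB⟩ := Finset.notMem_union.1 hx
  by_cases hmax : ∀ a ∈ A, a < x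
  · exact ⟨false, _, .append hmax hxB⟩
  have hne : (A.filter (x < ·)).Nonempty := by
    push Not at hmax
    obtain ⟨a, ha, hxa⟩ := hmax
    exact ⟨a, Finset.mem_filter.2 ⟨ha, hxa.lt_of_ne fun h => hxA (h ▸ ha)⟩⟩
  obtain ⟨y, hy, hmin⟩ := Finset.exists_min_image _ id hne
  obtain ⟨hyA, hxy⟩ := Finset.mem_filter.1 hy
  have hgap : ∀ a ∈ A.erase y, a < x ∨ y < a := by
    intro a ha
    obtain ⟨hay, ha⟩ := Finset.mem_erase.1 ha
    rcases lt_or_gt_of_ne fun h : a = x => hxA (h ▸ ha) with hax | hxa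
    · exact .inl hax
    · exact .inr ((hmin a (Finset.mem_filter.2 ⟨ha, hxa⟩)).lt_of_ne' hay)
  have hB : ∀ b ∈ B, b < y := by
    intro b hb
    by_contra hby
    have hyb : y ≠ b := fun h => Finset.disjoint_left.1 hT hyA (h ▸ hb)
    exact hcross ⟨y, hyA, b, hb, hxy, by omega, hlt b (Finset.mem_union_right _ hb)⟩
  have hins := Inserts.bump hxy hgap hB hxB
  rw [Finset.insert_erase hyA] at hins
  exact ⟨true, _, hins⟩

theorem exists_inserts_append {T' : TwoRows} (hT' : Disjoint T'.top T'.bottom)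
    (hne : T'.top.Nonempty) : ∃ x T, Inserts x false T T' := by
  obtain ⟨A, B⟩ := T'
  obtain ⟨x, hxA, hmax⟩ := Finset.exists_max_image A id hne
  have hlt : ∀ a ∈ A.erase x, a < x := fun a ha =>
    (hmax a (Finset.mem_of_mem_erase ha)).lt_of_ne (Finset.ne_of_mem_erase ha)
  have hins := Inserts.append hlt (Finset.disjoint_left.1 hT' hxA)
  rw [Finset.insert_erase hxA] at hins
  exact ⟨x, _, hins⟩

theorem IsTableau.exists_inserts_bump {T' : TwoRows} (hT' : T'.IsTableau)
    (hne : T'.bottom.Nonempty) : ∃ x T, Inserts x true T T' := by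
  obtain ⟨A, B⟩ := T'
  obtain ⟨hdisj, hbal⟩ := hT'
  obtain ⟨y, hyB, hmaxB⟩ := Finset.exists_max_image B id hne
  have hyA : y ∉ A := Finset.disjoint_right.1 hdisj hyB
  have hne : (A.filter (· < y)).Nonempty := by
    obtain ⟨a, ha, hay⟩ := countBelow_pos.1 <|
      (countBelow_pos.2 ⟨y, hyB, y.lt_succ_self⟩).trans_le (hbal (y + 1))
    exact ⟨a, Finset.mem_filter.2 ⟨ha, (Nat.le_of_lt_succ hay).lt_of_ne fun h => hyA (h ▸ ha)⟩⟩
  obtain ⟨x, hx, hmaxA⟩ := Finset.exists_max_image _ id hne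
  obtain ⟨hxA, hxy⟩ := Finset.mem_filter.1 hx
  have hgap : ∀ a ∈ A.erase x, a < x ∨ y < a := by
    intro a ha
    obtain ⟨hax, ha⟩ := Finset.mem_erase.1 ha
    rcases lt_or_gt_of_ne fun h : a = y => hyA (h ▸ ha) with hay | hya
    · exact .inl ((hmaxA a (Finset.mem_filter.2 ⟨ha, hay⟩)).lt_of_ne hax)
    · exact .inr hya
  have hB : ∀ b ∈ B.erase y, b < y := fun b hb =>
    (hmaxB b (Finset.mem_of_mem_erase hb)).lt_of_ne (Finset.ne_of_mem_erase hb)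
  have hins := Inserts.bump hxy hgap hB
    fun h => Finset.disjoint_left.1 hdisj hxA (Finset.mem_of_mem_erase h)
  rw [Finset.insert_erase hxA, Finset.insert_erase hyB] at hins
  exact ⟨x, _, hins⟩

theorem IsTableau.exists_inserts {T' : TwoRows} {b : Bool} (hT' : T'.IsTableau)
    (hnonneg : 0 ≤ T'.excess + stepSign b)
    (hle : T'.excess + stepSign b ≤ T'.size + stepSign false) :
    ∃ x T, Inserts x b T T' ∧ T.IsTableau := by
  obtain ⟨x, T, hins⟩ : ∃ x T, Inserts x b T T' := by
    cases b <;> simp only [excess, size, stepSign_false, stepSign_true] at hnonneg hle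
    · exact exists_inserts_append hT'.disjoint (Finset.card_pos.1 (by omega))
    · exact hT'.exists_inserts_bump (Finset.card_pos.1 (by omega))
  refine ⟨x, T, hins, hins.isTableau_of_card hT' ?_⟩
  rw [← hins.excess_eq, excess] at hnonneg
  omega

end TwoRows

/-! ### Paths below a path -/

theorem pathHeight_zero (t : List Bool) : pathHeight t 0 = 0 := by simp [pathHeight]

theorem pathHeight_cons_succ (b : Bool) (t : List Bool) (i : ℕ) :
    pathHeight (b :: t) (i + 1) = stepSign b + pathHeight t i := by
  cases b
  · simp only [pathHeight, stepSign_false, List.take_succ_cons, List.count_cons_self,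
      List.count_cons_of_ne Bool.false_ne_true, Nat.cast_succ]
    ring
  · simp only [pathHeight, stepSign_true, List.take_succ_cons, List.count_cons_self,
      List.count_cons_of_ne Bool.false_ne_true.symm, Nat.cast_succ]
    ring

theorem two_mul_count_true (t : List Bool) :
    (2 * t.count true : ℤ) = t.length + pathHeight t t.length := by
  have := t.count_true_add_count_false
  simp only [pathHeight, List.take_length]
  omega

/-- The path `s`, started at height `d`, is nonnegative and lies weakly below the path `t`, started
at height `h`, which ends at height `0`. -/
structure NonnegBelow (d h : ℤ) (s t : List Bool) : Prop where
  length_eq : s.length = t.length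
  nonneg : ∀ i, 0 ≤ d + pathHeight s i
  le : ∀ i, d + pathHeight s i ≤ h + pathHeight t i
  end_eq : h + pathHeight t t.length = 0

theorem nonnegBelow_cons_iff {d h : ℤ} {b c : Bool} {s t : List Bool} :
    NonnegBelow d h (b :: s) (c :: t) ↔
      0 ≤ d ∧ d ≤ h ∧ NonnegBelow (d + stepSign b) (h + stepSign c) s t := by
  constructor
  · rintro ⟨hlen, hnonneg, hle, hend⟩
    refine ⟨by simpa only [pathHeight_zero, add_zero] using hnonneg 0,
      by simpa only [pathHeight_zero, add_zero] using hle 0,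
      by simpa using hlen, fun i => ?_, fun i => ?_, ?_⟩
    · simpa only [pathHeight_cons_succ, add_assoc] using hnonneg (i + 1)
    · simpa only [pathHeight_cons_succ, add_assoc] using hle (i + 1)
    · simpa only [List.length_cons, pathHeight_cons_succ, add_assoc] using hend
  · rintro ⟨hd, hdh, hlen, hnonneg, hle, hend⟩
    refine ⟨by simpa using hlen, fun i => ?_, fun i => ?_, ?_⟩
    · cases i with
      | zero => simpa only [pathHeight_zero, add_zero] using hd
      | succ i => simpa only [pathHeight_cons_succ, add_assoc] using hnonneg i
    · cases i with
      | zero => simpa only [pathHeight_zero, add_zero] using hdh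
      | succ i => simpa only [pathHeight_cons_succ, add_assoc] using hle i
    · simpa only [List.length_cons, pathHeight_cons_succ, add_assoc] using hend

theorem nonnegBelow_nil_iff {d h : ℤ} : NonnegBelow d h [] [] ↔ 0 ≤ d ∧ d ≤ h ∧ h = 0 := by
  have hnil (i : ℕ) : pathHeight [] i = 0 := by simp [pathHeight]
  constructor
  · rintro ⟨-, hnonneg, hle, hend⟩
    simp only [hnil, add_zero] at hnonneg hle hend
    exact ⟨hnonneg 0, hle 0, hend⟩
  · rintro ⟨hd, hdh, hh⟩
    constructor <;> simp only [hnil, add_zero] <;> tauto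

theorem NonnegBelow.start_nonneg {d h : ℤ} {s t : List Bool} (hst : NonnegBelow d h s t) :
    0 ≤ d := by
  simpa only [pathHeight_zero, add_zero] using hst.nonneg 0

theorem NonnegBelow.start_le {d h : ℤ} {s t : List Bool} (hst : NonnegBelow d h s t) : d ≤ h := by
  simpa only [pathHeight_zero, add_zero] using hst.le 0

theorem isDyckPath_iff_pathHeight {n : ℕ} {t : List Bool} :
    IsDyckPath n t ↔
      t.length = 2 * n ∧ pathHeight t t.length = 0 ∧ ∀ i, 0 ≤ pathHeight t i := by
  have := two_mul_count_true t
  simp only [IsDyckPath, pathHeight, sub_nonneg, Nat.cast_le] at this ⊢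
  constructor <;> rintro ⟨hlen, hcount, hle⟩ <;> exact ⟨hlen, by omega, hle⟩

theorem isDyckPath_and_weaklyBelow_iff {n : ℕ} {s t : List Bool} (ht : IsDyckPath n t) :
    IsDyckPath n s ∧ WeaklyBelow s t ↔ NonnegBelow 0 0 s t := by
  obtain ⟨htlen, htend, -⟩ := isDyckPath_iff_pathHeight.1 ht
  rw [isDyckPath_iff_pathHeight]
  constructor
  · rintro ⟨⟨hlen, -, hnonneg⟩, hle⟩
    exact ⟨hlen.trans htlen.symm, by simpa using hnonneg, fun i => by simpa using hle i,
      by simpa using htend⟩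
  · rintro ⟨hlen, hnonneg, hle, -⟩
    simp only [zero_add] at hnonneg hle
    refine ⟨⟨hlen.trans htlen, (hnonneg _).antisymm' ?_, hnonneg⟩, hle⟩
    exact (hle _).trans_eq (by rw [hlen, htend])

/-! ### Matchings read from left to right -/

/-- The positions of the steps `b` of `t`, where the first step of `t` has position `j`. -/
def stepsAt (b : Bool) : ℕ → List Bool → Finset ℕ
  | _, [] => ∅
  | j, c :: t => if c = b then insert j (stepsAt b (j + 1) t) else stepsAt b (j + 1) t

theorem mem_stepsAt {b : Bool} {j v : ℕ} {t : List Bool} :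
    v ∈ stepsAt b j t ↔ ∃ i, t[i]? = some b ∧ v = j + i := by
  induction t generalizing j with
  | nil => simp [stepsAt]
  | cons c t ih =>
    have : v ∈ stepsAt b j (c :: t) ↔ v = j ∧ c = b ∨ v ∈ stepsAt b (j + 1) t := by
      by_cases hc : c = b <;> simp [stepsAt, hc]
    rw [this, ih]
    constructor
    · rintro (⟨rfl, rfl⟩ | ⟨i, hi, rfl⟩)
      · exact ⟨0, by simp⟩
      · exact ⟨i + 1, by simpa using hi, by omega⟩
    · rintro ⟨_ | i, hi, rfl⟩
      · exact .inl ⟨rfl, by simpa using hi⟩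
      · exact .inr ⟨i, by simpa using hi, by omega⟩

theorem le_of_mem_stepsAt {b : Bool} {j v : ℕ} {t : List Bool} (h : v ∈ stepsAt b j t) :
    j ≤ v := by
  obtain ⟨i, -, rfl⟩ := mem_stepsAt.1 h
  exact Nat.le_add_right j i

/-- The arcs of `M` match the points of `S` and the positions `j, j + 1, …` of the steps of `t`,
the openers being `S` and the east steps and the closers being the south steps. Thus `M` is the part
of a matching formed by the arcs closing at `j` or later, and `S` is the set of its openers which
come before `j`. -/
structure IsCompletion (j : ℕ) (S : Finset ℕ) (t : List Bool) (M : Finset (ℕ × ℕ)) : Prop where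
  lt : ∀ p ∈ M, p.1 < p.2
  image_fst : M.image Prod.fst = S ∪ stepsAt true j t
  image_snd : M.image Prod.snd = stepsAt false j t
  injOn_fst : Set.InjOn Prod.fst (M : Set (ℕ × ℕ))
  injOn_snd : Set.InjOn Prod.snd (M : Set (ℕ × ℕ))

section Completion

variable {j : ℕ} {S : Finset ℕ} {t : List Bool} {M : Finset (ℕ × ℕ)}

theorem isCompletion_nil_iff : IsCompletion j S [] M ↔ S = ∅ ∧ M = ∅ := by
  constructor
  · rintro ⟨-, hfst, hsnd, -, -⟩
    obtain rfl := Finset.image_eq_empty.1 hsnd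
    exact ⟨by simpa [stepsAt, eq_comm] using hfst, rfl⟩
  · rintro ⟨rfl, rfl⟩
    constructor <;> simp [stepsAt]

theorem isCompletion_true_cons_iff :
    IsCompletion j S (true :: t) M ↔ IsCompletion (j + 1) (insert j S) t M := by
  have : S ∪ stepsAt true j (true :: t) = insert j S ∪ stepsAt true (j + 1) t := by
    simp [stepsAt, Finset.union_insert, Finset.insert_union]
  constructor <;> rintro ⟨hlt, hfst, hsnd, hinj₁, hinj₂⟩
  · exact ⟨hlt, hfst.trans this, hsnd, hinj₁, hinj₂⟩
  · exact ⟨hlt, hfst.trans this.symm, hsnd, hinj₁, hinj₂⟩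

theorem IsCompletion.le_snd (hM : IsCompletion j S t M) {p : ℕ × ℕ} (hp : p ∈ M) : j ≤ p.2 :=
  le_of_mem_stepsAt (hM.image_snd ▸ Finset.mem_image_of_mem Prod.snd hp)

theorem isCompletion_false_cons_iff {x : ℕ} (hxS : x ∉ S) (hxj : x < j) (hM : (x, j) ∉ M) :
    IsCompletion j (insert x S) (false :: t) (insert (x, j) M) ↔ IsCompletion (j + 1) S t M := by
  have hx : x ∉ S ∪ stepsAt true (j + 1) t := by
    refine Finset.notMem_union.2 ⟨hxS, fun h => ?_⟩
    have := le_of_mem_stepsAt h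
    omega
  have hj : j ∉ stepsAt false (j + 1) t := fun h => (le_of_mem_stepsAt h).not_gt j.lt_succ_self
  have hM' : (x, j) ∉ (M : Set (ℕ × ℕ)) := hM
  constructor
  · rintro ⟨hlt, hfst, hsnd, hinj₁, hinj₂⟩
    rw [Finset.coe_insert, Set.injOn_insert hM', ← Finset.coe_image, Finset.mem_coe] at hinj₁ hinj₂
    refine ⟨fun p hp => hlt p (Finset.mem_insert_of_mem hp), ?_, ?_, hinj₁.1, hinj₂.1⟩
    · rw [← Finset.erase_insert hinj₁.2, ← Finset.erase_insert hx, ← Finset.insert_union]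
      simpa [stepsAt] using congrArg (Finset.erase · x) hfst
    · rw [← Finset.erase_insert hinj₂.2, ← Finset.erase_insert hj]
      simpa [stepsAt] using congrArg (Finset.erase · j) hsnd
  · rintro ⟨hlt, hfst, hsnd, hinj₁, hinj₂⟩
    refine ⟨Finset.forall_mem_insert _ _ _ |>.2 ⟨hxj, hlt⟩, by simp [hfst, stepsAt],
      by simp [hsnd, stepsAt], ?_, ?_⟩
    · rw [Finset.coe_insert, Set.injOn_insert hM', ← Finset.coe_image, hfst]
      exact ⟨hinj₁, hx⟩
    · rw [Finset.coe_insert, Set.injOn_insert hM', ← Finset.coe_image, hsnd]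
      exact ⟨hinj₂, hj⟩

theorem IsCompletion.exists_opener (hM : IsCompletion j S (false :: t) M) :
    ∃ x ∈ S, (x, j) ∈ M := by
  have hj : j ∈ M.image Prod.snd := by simp [hM.image_snd, stepsAt]
  obtain ⟨⟨x, _⟩, hx, rfl⟩ := Finset.mem_image.1 hj
  have hxj := hM.lt _ hx
  have : x ∈ M.image Prod.fst := Finset.mem_image_of_mem Prod.fst hx
  rw [hM.image_fst, Finset.mem_union] at this
  refine ⟨x, this.resolve_right fun h => ?_, hx⟩
  exact (le_of_mem_stepsAt h).not_gt hxj

theorem insert_closer_inj {M₁ M₂ : Finset (ℕ × ℕ)} {x₁ x₂ : ℕ} (h₁ : ∀ p ∈ M₁, j < p.2)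
    (h₂ : ∀ p ∈ M₂, j < p.2) (h : insert (x₁, j) M₁ = insert (x₂, j) M₂) :
    x₁ = x₂ ∧ M₁ = M₂ := by
  have hnotMem₁ : (x₁, j) ∉ M₁ := fun hp => (h₁ _ hp).false
  have hnotMem₂ : (x₁, j) ∉ M₂ := fun hp => (h₂ _ hp).false
  have hmem : (x₁, j) ∈ insert (x₂, j) M₂ := h ▸ Finset.mem_insert_self _ _
  obtain rfl : x₁ = x₂ := (Prod.ext_iff.1 <| (Finset.mem_insert.1 hmem).resolve_right hnotMem₂).1
  exact ⟨rfl, Finset.insert_erase_invOn.2.injOn hnotMem₁ hnotMem₂ h⟩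

end Completion

/-- The openers of some two crossing arcs of `M` lie strictly between `v` and `N`. Since it is used
for sets of arcs closing at `N` or later, there is no need to require that the second opener precede
the first closer. -/
def HasCrossing (M : Finset (ℕ × ℕ)) (v N : ℕ) : Prop :=
  ∃ p ∈ M, ∃ q ∈ M, v < p.1 ∧ p.1 < q.1 ∧ q.1 < N ∧ p.2 < q.2

/-- Some three arcs of `M` cross pairwise. -/
def HasThreeCrossing (M : Finset (ℕ × ℕ)) : Prop :=
  ∃ o ∈ M, ∃ p ∈ M, ∃ q ∈ M, o.1 < p.1 ∧ p.1 < q.1 ∧ q.1 < o.2 ∧ o.2 < p.2 ∧ p.2 < q.2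

section Crossing

variable {M : Finset (ℕ × ℕ)} {x j : ℕ}

theorem hasCrossing_insert_iff (hM : ∀ p ∈ M, j < p.2) {v N : ℕ} :
    HasCrossing (insert (x, j) M) v N ↔
      HasCrossing M v N ∨ v < x ∧ ∃ p ∈ M, x < p.1 ∧ p.1 < N := by
  simp only [HasCrossing, Finset.mem_insert]
  constructor
  · rintro ⟨p, rfl | hp, q, rfl | hq, hvp, hpq, hqN, hlt⟩
    · exact (hpq.false).elim
    · exact .inr ⟨hvp, q, hq, hpq, hqN⟩
    · exact ((hM p hp).asymm hlt).elim
    · exact .inl ⟨p, hp, q, hq, hvp, hpq, hqN, hlt⟩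
  · rintro (⟨p, hp, q, hq, h⟩ | ⟨hvx, q, hq, hxq, hqN⟩)
    · exact ⟨p, .inr hp, q, .inr hq, h⟩
    · exact ⟨(x, j), .inl rfl, q, .inr hq, hvx, hxq, hqN, hM q hq⟩

theorem hasThreeCrossing_insert_iff (hM : ∀ p ∈ M, j < p.2) :
    HasThreeCrossing (insert (x, j) M) ↔ HasThreeCrossing M ∨ HasCrossing M x j := by
  simp only [HasThreeCrossing, HasCrossing, Finset.mem_insert]
  constructor
  · rintro ⟨o, rfl | ho, p, rfl | hp, q, rfl | hq, hop, hpq, hqo, hop', hpq'⟩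
    all_goals first
      | omega
      | exact .inr ⟨p, hp, q, hq, hop, hpq, hqo, hpq'⟩
      | exact .inl ⟨o, ho, p, hp, q, hq, hop, hpq, hqo, hop', hpq'⟩
      | (have := hM o ho; omega)
  · rintro (⟨o, ho, p, hp, q, hq, h⟩ | ⟨p, hp, q, hq, hxp, hpq, hqj, hlt⟩)
    · exact ⟨o, .inr ho, p, .inr hp, q, .inr hq, h⟩
    · exact ⟨(x, j), .inl rfl, p, .inr hp, q, .inr hq, hxp, hpq, hqj, hM p hp, hlt⟩

theorem matchAvoids_p321_iff : MatchAvoids p321 M ↔ ¬ HasThreeCrossing M := by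
  refine not_congr ⟨?_, ?_⟩
  · rintro ⟨f, hf, hM⟩
    refine ⟨_, hM 0, _, hM 1, _, hM 2, hf ?_, hf ?_, hf ?_, hf ?_, hf ?_⟩ <;> decide
  · rintro ⟨⟨x, cx⟩, hx, ⟨y, cy⟩, hy, ⟨z, cz⟩, hz, hxy, hyz, hzc, hcxy, hcyz⟩
    refine ⟨![x, y, z, cx, cy, cz], Fin.strictMono_iff_lt_succ (n := 5) |>.2 fun i => ?_,
      fun a => ?_⟩
    · fin_cases i <;> assumption
    · fin_cases a <;> assumption

end Crossing

theorem shapeOf_getElem?_eq_some_iff {n i : ℕ} {b : Bool} {M : Finset (ℕ × ℕ)} :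
    (shapeOf n M)[i]? = some b ↔ i < 2 * n ∧ (b = true ↔ i + 1 ∈ M.image Prod.fst) := by
  by_cases hi : i < 2 * n <;> cases b <;> simp [shapeOf, hi]

theorem IsPerfectMatching.eq_of_shared_point {n v : ℕ} {M : Finset (ℕ × ℕ)}
    (hM : IsPerfectMatching n M) {p q : ℕ × ℕ} (hp : p ∈ M) (hq : q ∈ M)
    (hpv : p.1 = v ∨ p.2 = v) (hqv : q.1 = v ∨ q.2 = v) : p = q := by
  have := hM.1 p hp
  exact (hM.2 v (by omega) (by omega)).unique ⟨hp, hpv⟩ ⟨hq, hqv⟩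

theorem IsPerfectMatching.snd_notMem_image_fst {n : ℕ} {M : Finset (ℕ × ℕ)}
    (hM : IsPerfectMatching n M) {p : ℕ × ℕ} (hp : p ∈ M) : p.2 ∉ M.image Prod.fst := by
  intro h
  obtain ⟨q, hq, hqp⟩ := Finset.mem_image.1 h
  obtain rfl := hM.eq_of_shared_point hp hq (.inr rfl) (.inl hqp)
  exact (hM.1 p hp).1.ne hqp

theorem IsPerfectMatching.isCompletion {n : ℕ} {M : Finset (ℕ × ℕ)} (hM : IsPerfectMatching n M) :
    IsCompletion 1 ∅ (shapeOf n M) M := by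
  have hbd := hM.1
  refine ⟨fun p hp => (hbd p hp).1, ?_, ?_,
    fun p hp q hq h => hM.eq_of_shared_point hp hq (.inl h) (.inl rfl),
    fun p hp q hq h => hM.eq_of_shared_point hp hq (.inr h) (.inr rfl)⟩
  · ext v
    simp only [Finset.empty_union, mem_stepsAt, shapeOf_getElem?_eq_some_iff, true_iff]
    constructor
    · intro hv
      obtain ⟨p, hp, rfl⟩ := Finset.mem_image.1 hv
      have := hbd p hp
      exact ⟨p.1 - 1, ⟨by omega, by rwa [Nat.sub_add_cancel this.2.1]⟩, by omega⟩
    · rintro ⟨i, ⟨-, hi⟩, rfl⟩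
      rwa [add_comm]
  · ext v
    simp only [mem_stepsAt, shapeOf_getElem?_eq_some_iff, Bool.false_eq_true, false_iff]
    constructor
    · intro hv
      obtain ⟨p, hp, rfl⟩ := Finset.mem_image.1 hv
      have := hbd p hp
      refine ⟨p.2 - 1, ⟨by omega, ?_⟩, by omega⟩
      rw [Nat.sub_add_cancel (by omega)]
      exact hM.snd_notMem_image_fst hp
    · rintro ⟨i, ⟨hin, hi⟩, rfl⟩
      obtain ⟨p, ⟨hp, hpv⟩, -⟩ := hM.2 (1 + i) (by omega) (by omega)
      rw [add_comm] at hi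
      rcases hpv with hpv | hpv
      · exact (hi (hpv ▸ Finset.mem_image_of_mem Prod.fst hp)).elim
      · exact hpv ▸ Finset.mem_image_of_mem Prod.snd hp

section PerfectMatching

variable {n : ℕ} {t : List Bool} {M : Finset (ℕ × ℕ)}

theorem IsCompletion.mem_image_fst_iff (hM : IsCompletion 1 ∅ t M) {i : ℕ} :
    i + 1 ∈ M.image Prod.fst ↔ t[i]? = some true := by
  rw [hM.image_fst, Finset.empty_union, mem_stepsAt]
  grind

theorem IsCompletion.mem_image_snd_iff (hM : IsCompletion 1 ∅ t M) {i : ℕ} :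
    i + 1 ∈ M.image Prod.snd ↔ t[i]? = some false := by
  rw [hM.image_snd, mem_stepsAt]
  grind

theorem IsCompletion.shapeOf_eq (ht : t.length = 2 * n) (hM : IsCompletion 1 ∅ t M) :
    shapeOf n M = t := by
  refine List.ext_getElem? fun i => Option.ext fun b => ?_
  rw [shapeOf_getElem?_eq_some_iff, hM.mem_image_fst_iff, ← ht]
  by_cases hi : i < t.length
  · cases b <;> simp [hi]
  · simp [hi]

theorem IsCompletion.isPerfectMatching (ht : t.length = 2 * n) (hM : IsCompletion 1 ∅ t M) :
    IsPerfectMatching n M := by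
  have mem_fst {p : ℕ × ℕ} (hp : p ∈ M) : p.1 ∈ M.image Prod.fst :=
    Finset.mem_image_of_mem Prod.fst hp
  have mem_snd {p : ℕ × ℕ} (hp : p ∈ M) : p.2 ∈ M.image Prod.snd :=
    Finset.mem_image_of_mem Prod.snd hp
  refine ⟨fun p hp => ⟨hM.lt p hp, ?_, ?_⟩, fun v hv hvn => ?_⟩
  · have := mem_fst hp
    rw [hM.image_fst, Finset.empty_union] at this
    exact le_of_mem_stepsAt this
  · obtain ⟨i, hi, hpi⟩ := mem_stepsAt.1 (hM.image_snd ▸ mem_snd hp)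
    obtain ⟨hit, -⟩ := List.getElem?_eq_some_iff.1 hi
    omega
  · obtain ⟨i, rfl⟩ := Nat.exists_eq_add_of_le' hv
    have not_both : ¬ (i + 1 ∈ M.image Prod.fst ∧ i + 1 ∈ M.image Prod.snd) := by
      rw [hM.mem_image_fst_iff, hM.mem_image_snd_iff]
      grind
    have hi : t[i]? = some t[i] := List.getElem?_eq_getElem (by omega)
    cases hb : t[i] with
    | true =>
      have hmem := hM.mem_image_fst_iff.2 (hb ▸ hi)
      obtain ⟨p, hp, hpi⟩ := Finset.mem_image.1 hmem
      refine ⟨p, ⟨hp, .inl hpi⟩, ?_⟩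
      rintro q ⟨hq, hqi | hqi⟩
      · exact hM.injOn_fst hq hp (hqi.trans hpi.symm)
      · exact (not_both ⟨hmem, hqi ▸ mem_snd hq⟩).elim
    | false =>
      have hmem := hM.mem_image_snd_iff.2 (hb ▸ hi)
      obtain ⟨p, hp, hpi⟩ := Finset.mem_image.1 hmem
      refine ⟨p, ⟨hp, .inr hpi⟩, ?_⟩
      rintro q ⟨hq, hqi | hqi⟩
      · exact (not_both ⟨hqi ▸ mem_fst hq, hmem⟩).elim
      · exact hM.injOn_snd hq hp (hqi.trans hpi.symm)

theorem isPerfectMatching_and_shapeOf_eq_iff (ht : t.length = 2 * n) :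
    IsPerfectMatching n M ∧ shapeOf n M = t ↔ IsCompletion 1 ∅ t M := by
  constructor
  · rintro ⟨hM, rfl⟩
    exact hM.isCompletion
  · exact fun hM => ⟨hM.isPerfectMatching ht, hM.shapeOf_eq ht⟩

end PerfectMatching

/-! ### The correspondence between noncrossing matchings and paths -/

/-- `ArcScan j T t s M`: reading the arcs of `M` from right to left down to position `j` produces
the tableau `T`, where each closer inserts its opener and each opener removes itself, being then the
largest entry. The steps of `t` from position `j` on tell openers from closers, and those of `s`
tell whether the excess of the tableau goes up or down from left to right. -/
inductive ArcScan : ℕ → TwoRows → List Bool → List Bool → Finset (ℕ × ℕ) → Prop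
  | nil (j : ℕ) : ArcScan j ⟨∅, ∅⟩ [] [] ∅
  | opener {j : ℕ} {b : Bool} {T : TwoRows} {t s : List Bool} {M : Finset (ℕ × ℕ)}
      (hlt : ∀ v ∈ T.entries, v < j) (h : ArcScan (j + 1) (T.push j b) t s M) :
      ArcScan j T (true :: t) (b :: s) M
  | closer {j x : ℕ} {b : Bool} {T T' : TwoRows} {t s : List Bool} {M : Finset (ℕ × ℕ)}
      (hlt : ∀ v ∈ T.entries, v < j) (hins : T'.Inserts x b T) (h : ArcScan (j + 1) T' t s M) :
      ArcScan j T (false :: t) (b :: s) (insert (x, j) M)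

namespace ArcScan

variable {j : ℕ} {T : TwoRows} {t s : List Bool} {M : Finset (ℕ × ℕ)}

theorem isTableau (h : ArcScan j T t s M) : T.IsTableau := by
  induction h with
  | nil => exact TwoRows.isTableau_empty
  | opener hlt _ ih => exact ih.of_push hlt
  | closer _ hins _ ih => exact hins.isTableau ih

theorem isCompletion (h : ArcScan j T t s M) : IsCompletion j T.entries t M := by
  induction h with
  | nil => exact isCompletion_nil_iff.2 ⟨rfl, rfl⟩
  | opener _ _ ih =>
    rw [TwoRows.entries_push] at ih
    exact isCompletion_true_cons_iff.2 ih
  | @closer j x _ _ _ _ _ M hlt hins _ ih =>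
    have hxj : x < j := hlt x (hins.entries_eq ▸ Finset.mem_insert_self x _)
    rw [hins.entries_eq, isCompletion_false_cons_iff hins.notMem_entries hxj]
    · exact ih
    · exact fun hM => (ih.le_snd hM).not_gt j.lt_succ_self

theorem lt_snd (h : ArcScan (j + 1) T t s M) : ∀ p ∈ M, j < p.2 := fun _ hp =>
  h.isCompletion.le_snd hp

theorem nonnegBelow (h : ArcScan j T t s M) : NonnegBelow T.excess T.size s t := by
  induction h with
  | nil => exact nonnegBelow_nil_iff.2 (by simp [TwoRows.excess, TwoRows.size])
  | @opener j _ T _ _ _ hlt h ih =>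
    have hT := (opener hlt h).isTableau
    have hj : j ∉ T.entries := fun hj => (hlt j hj).false
    refine nonnegBelow_cons_iff.2 ⟨hT.excess_nonneg, TwoRows.excess_le_size _, ?_⟩
    rwa [TwoRows.excess_push hj, TwoRows.size_push hj] at ih
  | closer hlt hins h ih =>
    have hT := (closer hlt hins h).isTableau
    refine nonnegBelow_cons_iff.2 ⟨hT.excess_nonneg, TwoRows.excess_le_size _, ?_⟩
    rwa [hins.excess_eq, hins.size_eq] at ih

theorem hasCrossing_iff (h : ArcScan j T t s M) {v N : ℕ} (hN : N ≤ j) :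
    HasCrossing M v N ↔ T.HasCrossing v N := by
  induction h generalizing v N with
  | nil => simp [HasCrossing, TwoRows.HasCrossing]
  | opener _ _ ih => exact (ih (by omega)).trans (TwoRows.hasCrossing_push_iff hN)
  | @closer j x _ _ T' t _ M _ hins h ih =>
    have hopener : (∃ p ∈ M, x < p.1 ∧ p.1 < N) ↔ ∃ z ∈ T'.entries, x < z ∧ z < N := by
      have hmem (z : ℕ) : (∃ p ∈ M, p.1 = z) ↔ z ∈ T'.entries ∨ z ∈ stepsAt true (j + 1) t := by
        rw [← Finset.mem_union, ← h.isCompletion.image_fst, Finset.mem_image]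
      constructor
      · rintro ⟨p, hp, hxp, hpN⟩
        refine ⟨p.1, ((hmem p.1).1 ⟨p, hp, rfl⟩).resolve_right fun hz => ?_, hxp, hpN⟩
        have := le_of_mem_stepsAt hz
        omega
      · rintro ⟨z, hz, hxz, hzN⟩
        obtain ⟨p, hp, rfl⟩ := (hmem z).2 (.inl hz)
        exact ⟨p, hp, hxz, hzN⟩
    rw [hasCrossing_insert_iff h.lt_snd, hins.hasCrossing_iff, ih (by omega), hopener]

theorem not_hasThreeCrossing (h : ArcScan j T t s M) : ¬ HasThreeCrossing M := by
  induction h with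
  | nil => simp [HasThreeCrossing]
  | opener _ _ ih => exact ih
  | closer _ hins h ih =>
    rw [hasThreeCrossing_insert_iff h.lt_snd, h.hasCrossing_iff (Nat.le_succ _)]
    exact not_or.2 ⟨ih, hins.not_hasCrossing _⟩

theorem matching_unique {M₁ M₂ : Finset (ℕ × ℕ)} (h₁ : ArcScan j T t s M₁)
    (h₂ : ArcScan j T t s M₂) : M₁ = M₂ := by
  induction h₁ generalizing M₂ with
  | nil => cases h₂; rfl
  | opener _ _ ih =>
    cases h₂ with
    | opener _ h₂ => exact ih h₂
  | closer _ hins _ ih =>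
    cases h₂ with
    | closer _ hins₂ h₂ =>
      obtain ⟨rfl, rfl⟩ := hins.left_unique hins₂
      rw [ih h₂]

theorem tableau_path_unique {T₁ T₂ : TwoRows} {s₁ s₂ : List Bool} (h₁ : ArcScan j T₁ t s₁ M)
    (h₂ : ArcScan j T₂ t s₂ M) : T₁ = T₂ ∧ s₁ = s₂ := by
  induction h₁ generalizing T₂ s₂ with
  | nil => cases h₂; exact ⟨rfl, rfl⟩
  | @opener j _ T₁ _ _ _ hlt₁ _ ih =>
    cases h₂ with
    | opener hlt₂ h₂ =>
      obtain ⟨hT, rfl⟩ := ih h₂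
      obtain ⟨rfl, rfl⟩ :=
        TwoRows.push_inj (fun hj => (hlt₁ j hj).false) (fun hj => (hlt₂ j hj).false) hT
      exact ⟨rfl, rfl⟩
  | @closer j x _ _ _ _ _ M _ hins₁ h₁ ih =>
    generalize hM : insert (x, j) M = M' at h₂
    cases h₂ with
    | closer _ hins₂ h₂ =>
      obtain ⟨rfl, rfl⟩ := insert_closer_inj h₁.lt_snd h₂.lt_snd hM
      obtain ⟨rfl, rfl⟩ := ih h₂
      obtain ⟨rfl, rfl⟩ := hins₁.right_unique hins₂
      exact ⟨rfl, rfl⟩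

end ArcScan

theorem exists_arcScan_of_nonnegBelow {j : ℕ} {T : TwoRows} {s t : List Bool} (hT : T.IsTableau)
    (hlt : ∀ v ∈ T.entries, v < j) (hst : NonnegBelow T.excess T.size s t) :
    ∃ M, ArcScan j T t s M := by
  induction t generalizing j T s with
  | nil =>
    obtain rfl := List.length_eq_zero_iff.1 hst.length_eq
    obtain rfl := TwoRows.eq_empty_of_size_eq_zero (nonnegBelow_nil_iff.1 hst).2.2
    exact ⟨∅, .nil j⟩
  | cons c t ih =>
    obtain ⟨b, s, rfl⟩ := List.exists_cons_of_length_eq_add_one hst.length_eq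
    obtain ⟨-, -, hst⟩ := nonnegBelow_cons_iff.1 hst
    have hlt' : ∀ v ∈ insert j T.entries, v < j + 1 := fun v hv => by
      rcases Finset.mem_insert.1 hv with rfl | hv
      · exact v.lt_succ_self
      · exact (hlt v hv).trans j.lt_succ_self
    cases c with
    | false =>
      obtain ⟨x, T', hins, hT'⟩ := hT.exists_inserts hst.start_nonneg hst.start_le
      rw [← hins.excess_eq, ← hins.size_eq] at hst
      obtain ⟨M, hM⟩ := ih hT' (j := j + 1) (fun v hv => hlt' v <| Finset.mem_insert_of_mem <|
        hins.entries_eq ▸ Finset.mem_insert_of_mem hv) hst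
      exact ⟨_, .closer hlt hins hM⟩
    | true =>
      have hj : j ∉ T.entries := fun h => (hlt j h).false
      have hT' := hT.push hlt hst.start_nonneg
      rw [← TwoRows.excess_push hj, ← TwoRows.size_push hj] at hst
      obtain ⟨M, hM⟩ := ih hT' (j := j + 1) (TwoRows.entries_push ▸ hlt') hst
      exact ⟨M, .opener hlt hM⟩

theorem exists_arcScan_of_isCompletion {j : ℕ} {S : Finset ℕ} {t : List Bool}
    {M : Finset (ℕ × ℕ)} (hS : ∀ v ∈ S, v < j) (hM : IsCompletion j S t M)
    (hcross : ¬ HasThreeCrossing M) : ∃ T s, T.entries = S ∧ ArcScan j T t s M := by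
  induction t generalizing j S M with
  | nil =>
    obtain ⟨rfl, rfl⟩ := isCompletion_nil_iff.1 hM
    exact ⟨⟨∅, ∅⟩, [], rfl, .nil j⟩
  | cons c t ih =>
    cases c with
    | true =>
      have hjS : j ∉ S := fun h => (hS j h).false
      obtain ⟨T', s, hentries, hscan⟩ := ih (fun v hv => by
        rcases Finset.mem_insert.1 hv with rfl | hv
        · exact v.lt_succ_self
        · exact (hS v hv).trans j.lt_succ_self) (isCompletion_true_cons_iff.1 hM) hcross
      obtain ⟨T, b, hjT, rfl⟩ := TwoRows.exists_eq_push hscan.isTableau.disjoint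
        (hentries ▸ Finset.mem_insert_self j S)
      rw [TwoRows.entries_push] at hentries
      obtain rfl := Finset.insert_erase_invOn.2.injOn hjT hjS hentries
      exact ⟨T, b :: s, rfl, .opener hS hscan⟩
    | false =>
      obtain ⟨x, hxS, hxM⟩ := hM.exists_opener
      obtain ⟨S, hxS', rfl⟩ : ∃ S', x ∉ S' ∧ insert x S' = S :=
        ⟨S.erase x, Finset.notMem_erase x S, Finset.insert_erase hxS⟩
      obtain ⟨M, hxM', rfl⟩ : ∃ M', (x, j) ∉ M' ∧ insert (x, j) M' = M :=
        ⟨M.erase (x, j), Finset.notMem_erase _ M, Finset.insert_erase hxM⟩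
      rw [isCompletion_false_cons_iff hxS' (hS x hxS) hxM'] at hM
      rw [hasThreeCrossing_insert_iff fun p hp => hM.le_snd hp, not_or] at hcross
      have hSj : ∀ v ∈ S, v < j := fun v hv => hS v (Finset.mem_insert_of_mem hv)
      obtain ⟨T', s, rfl, hscan⟩ := ih (fun v hv => (hSj v hv).trans j.lt_succ_self) hM hcross.1
      rw [hscan.hasCrossing_iff (Nat.le_succ j)] at hcross
      obtain ⟨b, T, hins⟩ := TwoRows.exists_inserts_of_not_hasCrossing hscan.isTableau.disjoint
        hxS' hSj hcross.2
      exact ⟨T, b :: s, hins.entries_eq, .closer (hins.entries_eq ▸ hS) hins hscan⟩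

theorem ncard_eq_ncard_of_existsUnique {α β : Type*} {s : Set α} {t : Set β} {r : α → β → Prop}
    (hs : ∀ a ∈ s, ∃! b, b ∈ t ∧ r a b) (ht : ∀ b ∈ t, ∃! a, a ∈ s ∧ r a b) :
    s.ncard = t.ncard := by
  choose f hf hf_unique using hs
  refine Set.ncard_congr f (fun a ha => (hf a ha).1) (fun a a' ha ha' h => ?_) fun b hb => ?_
  · refine (ht (f a ha) (hf a ha).1).unique ⟨ha, (hf a ha).2⟩ ⟨ha', ?_⟩
    rw [h]
    exact (hf a' ha').2
  · obtain ⟨a, ⟨ha, hab⟩, -⟩ := ht b hb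
    exact ⟨a, ha, (hf_unique a ha b ⟨hb, hab⟩).symm⟩

theorem ncard_not_hasThreeCrossing_eq_ncard_nonnegBelow (j : ℕ) (t : List Bool) :
    {M | IsCompletion j ∅ t M ∧ ¬ HasThreeCrossing M}.ncard = {s | NonnegBelow 0 0 s t}.ncard := by
  refine ncard_eq_ncard_of_existsUnique (r := fun M s => ArcScan j ⟨∅, ∅⟩ t s M) ?_ ?_
  · rintro M ⟨hM, hcross⟩
    obtain ⟨T, s, hT, h⟩ := exists_arcScan_of_isCompletion (by simp) hM hcross
    obtain rfl := TwoRows.eq_empty_of_entries_eq_empty hT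
    exact ⟨s, ⟨h.nonnegBelow, h⟩, fun s' h' => (h'.2.tableau_path_unique h).2⟩
  · intro s hs
    obtain ⟨M, h⟩ := exists_arcScan_of_nonnegBelow (j := j) TwoRows.isTableau_empty (by
      simp [TwoRows.entries]) hs
    exact ⟨M, ⟨⟨h.isCompletion, h.not_hasThreeCrossing⟩, h⟩,
      fun M' h' => h'.2.matching_unique h⟩

/-- For every positive `n` and every Ferrers board `F ∈ F_n`
(given by its border Dyck path `t`), the number of `321`-avoiding perfect matchings
of shape `F` equals the number of Dyck paths of semilength `n` lying weakly below `t`. -/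
theorem card_matchings321_of_shape_eq_card_paths_below
    (n : ℕ) (hn : 0 < n) (t : List Bool) (ht : IsDyckPath n t) :
    {M : Finset (ℕ × ℕ) | IsPerfectMatching n M ∧ MatchAvoids p321 M ∧ shapeOf n M = t}.ncard =
    {s : List Bool | IsDyckPath n s ∧ WeaklyBelow s t}.ncard := by
  have hmatch (M : Finset (ℕ × ℕ)) :
      IsPerfectMatching n M ∧ MatchAvoids p321 M ∧ shapeOf n M = t ↔
        IsCompletion 1 ∅ t M ∧ ¬ HasThreeCrossing M := by
    rw [← isPerfectMatching_and_shapeOf_eq_iff ht.1, matchAvoids_p321_iff, and_assoc,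
      and_comm (a := shapeOf n M = t)]
  simp only [hmatch, isDyckPath_and_weaklyBelow_iff ht]
  exact ncard_not_hasThreeCrossing_eq_ncard_nonnegBelow 1 t
end

section
/- The patterns 321 and 213 are shape-Wilf-equivalent: for every positive integer n and every Ferrers board F in F_n, the number of 321-avoiding matchings of shape F equals the number of 213-avoiding matchings of shape F. Consequently, for every n the total number of 321-avoiding matchings of [2n] equals the total number of 213-avoiding matchings of [2n]. -/
/-!
Read a matching from left to right, keeping the set of pending openers. When a closer chooses its
partner, avoiding the pattern only imposes new *nesting* constraints: certain pairs of pending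
openers must be closed in the opposite order. For both patterns the constraints cut the pending
openers into blocks of consecutive elements, two openers constraining each other exactly when they
share a block, and a closer must take the last opener of a block. For `321` taking `o` merges the
openers after `o` into one block; for `213` it merges those before `o`, so that only the first block
can have several elements.

Give a state with blocks of sizes `b₁, …, bₖ` the weight `S b₁ * ⋯ * S bₖ`, where `S` is the
rescaled Chebyshev polynomial of the second kind. An opener multiplies the weight by `X`. By the
identity `S m * S (n + 1) = S (m + n + 1) + S (m - 1) * S n`, the weights of the states reachable
through a closer from a state with `h` pending openers and weight `P` add up, *for either pattern*,
to `X * P - S (h + 1)`. So the number of completions of a state is one and the same linear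
functional, depending only on the remaining steps, applied to its weight.
-/

section ChebyshevS

open Polynomial Polynomial.Chebyshev

theorem chebyshevS_mul_chebyshevS_add_one (R : Type*) [CommRing R] (m n : ℤ) :
    S R m * S R (n + 1) = S R (m + n + 1) + S R (m - 1) * S R n := by
  suffices h : S R m * S R (n + 1) = S R (m + n + 1) + S R (m - 1) * S R n ∧
      S R (m + 1) * S R (n + 1) = S R (m + 1 + n + 1) + S R m * S R n from h.1
  induction m using Int.induction_on with
  | zero =>
    have := S_add_two R n
    simp only [S_zero, S_one, zero_add, zero_sub, S_neg_one]
    grind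
  | succ k ih =>
    have h₁ := S_add_two R (k + n + 1)
    have h₂ := S_add_two R k
    have h₃ := S_add_one R k
    grind
  | pred k ih =>
    have h₁ := S_add_two R (-k + n)
    have h₂ := S_add_one R (-k)
    have h₃ := S_add_one R (-k - 1)
    grind

theorem isMonicOfDegree_chebyshevS (R : Type*) [CommRing R] [Nontrivial R] (n : ℕ) :
    IsMonicOfDegree (S R n) n := by
  induction n using Nat.twoStepInduction with
  | zero => simp
  | one => simpa using isMonicOfDegree_X R
  | more n hn hn' =>
    have hXS : IsMonicOfDegree (X * S R (n + 1 : ℕ)) (n + 2) := by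
      convert (isMonicOfDegree_X R).mul hn' using 1
      lia
    push_cast at hXS ⊢
    rw [S_add_two]
    exact hXS.sub (by rw [hn.natDegree_eq]; lia)

end ChebyshevS

theorem ncard_eq_of_ncard_fiber_eq {α β : Type*} {s t : Set α} (hs : s.Finite) (ht : t.Finite)
    (f : α → β) (h : ∀ b, {a ∈ s | f a = b}.ncard = {a ∈ t | f a = b}.ncard) :
    s.ncard = t.ncard := by
  classical
  lift s to Finset α using hs
  lift t to Finset α using ht
  have maps_to (u : Finset α) (hu : u ⊆ s ∪ t) : Set.MapsTo f u ((s ∪ t).image f) := fun a ha =>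
    Finset.mem_image_of_mem f (hu ha)
  rw [Set.ncard_coe_finset, Set.ncard_coe_finset,
    Finset.card_eq_sum_card_fiberwise (maps_to s Finset.subset_union_left),
    Finset.card_eq_sum_card_fiberwise (maps_to t Finset.subset_union_right)]
  refine Finset.sum_congr rfl fun b _ => ?_
  simpa [← Set.ncard_coe_finset] using h b

/-! ### Matchings with prescribed openers and closers -/

/-- `C` is a matching of the openers `A` with the closers `B`, each opener preceding its partner. -/
structure IsMatchingBetween (A B : Finset ℕ) (C : Finset (ℕ × ℕ)) : Prop where
  bijOn_fst : Set.BijOn Prod.fst (C : Set (ℕ × ℕ)) A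
  bijOn_snd : Set.BijOn Prod.snd (C : Set (ℕ × ℕ)) B
  fst_lt_snd : ∀ p ∈ C, p.1 < p.2

/-- The matching `C` nests the openers `x` and `y` whenever `R x y`: the partner of `y` comes
before the partner of `x`. -/
def RespectsNesting (R : ℕ → ℕ → Prop) (C : Finset (ℕ × ℕ)) : Prop :=
  ∀ ⦃x y x' y'⦄, R x y → (x, x') ∈ C → (y, y') ∈ C → y' < x'

open Classical in
/-- The openers in `A` that may be closed first when the nestings in `R` have to be respected. -/
noncomputable def closable (A : Finset ℕ) (R : ℕ → ℕ → Prop) : Finset ℕ :=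
  A.filter fun o => ∀ y ∈ A, ¬ R o y

open Classical in
/-- The `τ`-avoiding matchings of the openers `A` with the closers `B` respecting the nestings
in `R`. -/
noncomputable def constrainedMatchings {k : ℕ} (τ : Equiv.Perm (Fin k)) (A B : Finset ℕ)
    (R : ℕ → ℕ → Prop) : Finset (Finset (ℕ × ℕ)) :=
  (A ×ˢ B).powerset.filter fun C => IsMatchingBetween A B C ∧ MatchAvoids τ C ∧ RespectsNesting R C

/-- A description of the constraints that closing the opener `o` at the closer `i` puts on the
other pairs of a `τ`-avoiding matching, all of which are closed later: `forced i o x y` says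
that `x` and `y` have to be nested. -/
structure IsClosingRule {k : ℕ} (τ : Equiv.Perm (Fin k)) (forced : ℕ → ℕ → ℕ → ℕ → Prop) :
    Prop where
  lt_and_lt : ∀ {i o x y}, o < i → forced i o x y → x < y ∧ y < i
  avoids_insert_iff : ∀ {C : Finset (ℕ × ℕ)} {o i : ℕ}, Set.InjOn Prod.snd (C : Set (ℕ × ℕ)) →
    (∀ p ∈ C, i < p.2) → o < i →
      (MatchAvoids τ (insert (o, i) C) ↔ MatchAvoids τ C ∧ RespectsNesting (forced i o) C)

theorem mem_closable {A : Finset ℕ} {R : ℕ → ℕ → Prop} {o : ℕ} :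
    o ∈ closable A R ↔ o ∈ A ∧ ∀ y ∈ A, ¬ R o y := by
  classical simp [closable]

theorem closable_subset (A : Finset ℕ) (R : ℕ → ℕ → Prop) : closable A R ⊆ A :=
  fun _ ho => (mem_closable.1 ho).1

theorem respectsNesting_sup {R R' : ℕ → ℕ → Prop} {C : Finset (ℕ × ℕ)} :
    RespectsNesting (R ⊔ R') C ↔ RespectsNesting R C ∧ RespectsNesting R' C :=
  ⟨fun h => ⟨fun _ _ _ _ hR => h (Or.inl hR), fun _ _ _ _ hR => h (Or.inr hR)⟩,
    fun h _ _ _ _ hR => hR.elim (fun hR => h.1 hR) (fun hR => h.2 hR)⟩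

namespace IsMatchingBetween

variable {A B : Finset ℕ} {C : Finset (ℕ × ℕ)} {p : ℕ × ℕ} {o i : ℕ} {R : ℕ → ℕ → Prop}

theorem fst_mem (h : IsMatchingBetween A B C) (hp : p ∈ C) : p.1 ∈ A :=
  h.bijOn_fst.mapsTo hp

theorem snd_mem (h : IsMatchingBetween A B C) (hp : p ∈ C) : p.2 ∈ B :=
  h.bijOn_snd.mapsTo hp

theorem exists_mem_of_opener (h : IsMatchingBetween A B C) (ho : o ∈ A) : ∃ y, (o, y) ∈ C := by
  simpa using h.bijOn_fst.surjOn ho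

theorem exists_mem_of_closer (h : IsMatchingBetween A B C) (hi : i ∈ B) : ∃ x, (x, i) ∈ C := by
  simpa using h.bijOn_snd.surjOn hi

theorem image_fst (h : IsMatchingBetween A B C) : C.image Prod.fst = A := by
  exact_mod_cast h.bijOn_fst.image_eq

theorem insert_iff (ho : o ∈ A) (hi : i ∉ B) (hC : (o, i) ∉ C) :
    IsMatchingBetween A (insert i B) (insert (o, i) C) ↔
      o < i ∧ IsMatchingBetween (A.erase o) B C := by
  constructor
  · intro h
    have hfst := h.bijOn_fst.sdiff_singleton (a := (o, i)) (by simp)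
    have hsnd := h.bijOn_snd.sdiff_singleton (a := (o, i)) (by simp)
    refine ⟨h.fst_lt_snd (o, i) (by simp), ⟨?_, ?_, fun p hp => h.fst_lt_snd p (by simp [hp])⟩⟩
    · simpa [hC] using hfst
    · simpa [hC, hi] using hsnd
  · rintro ⟨hoi, h⟩
    refine ⟨?_, ?_, ?_⟩
    · simpa [ho] using h.bijOn_fst.insert (a := (o, i)) (by simp)
    · simpa using h.bijOn_snd.insert (a := (o, i)) (by simpa using hi)
    · simpa [hoi] using h.fst_lt_snd

theorem respectsNesting_insert_iff (h : IsMatchingBetween A B (insert (o, i) C))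
    (hC : ∀ p ∈ C, i < p.2) :
    RespectsNesting R (insert (o, i) C) ↔ (∀ y ∈ A, ¬ R o y) ∧ RespectsNesting R C := by
  constructor
  · intro hR
    refine ⟨fun y hy hoy => ?_, fun x y x' y' hxy hx hy => hR hxy (by simp [hx]) (by simp [hy])⟩
    obtain ⟨y', hy'⟩ := h.exists_mem_of_opener hy
    have hlt : y' < i := hR hoy (by simp) hy'
    grind
  · rintro ⟨ho, hR⟩ x y x' y' hxy hx hy
    have hyA : y ∈ A := h.fst_mem hy
    rcases Finset.mem_insert.1 hx with hx | hx
    · grind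
    · rcases Finset.mem_insert.1 hy with hy | hy
      · grind
      · exact hR hxy hx hy

end IsMatchingBetween

section ConstrainedMatchings

variable {k : ℕ} {τ : Equiv.Perm (Fin k)} {forced : ℕ → ℕ → ℕ → ℕ → Prop} {A B : Finset ℕ}
  {C : Finset (ℕ × ℕ)} {R : ℕ → ℕ → Prop} {o i : ℕ}

theorem mem_constrainedMatchings : C ∈ constrainedMatchings τ A B R ↔
    IsMatchingBetween A B C ∧ MatchAvoids τ C ∧ RespectsNesting R C := by
  simp only [constrainedMatchings, Finset.mem_filter, Finset.mem_powerset, and_iff_right_iff_imp]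
  exact fun h p hp => Finset.mem_product.2 ⟨h.1.fst_mem hp, h.1.snd_mem hp⟩

theorem insert_mem_constrainedMatchings_iff (hτ : IsClosingRule τ forced) (hB : ∀ b ∈ B, i < b)
    (hC : (o, i) ∉ C) :
    insert (o, i) C ∈ constrainedMatchings τ A (insert i B) R ↔
      (o ∈ closable A R ∧ o < i) ∧ C ∈ constrainedMatchings τ (A.erase o) B (R ⊔ forced i o) := by
  have hi : i ∉ B := fun h => (hB i h).false
  rw [mem_constrainedMatchings, mem_constrainedMatchings, mem_closable, respectsNesting_sup]
  by_cases hM : o ∈ A ∧ o < i ∧ IsMatchingBetween (A.erase o) B C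
  · obtain ⟨ho, hoi, hM⟩ := hM
    have hins := (IsMatchingBetween.insert_iff ho hi hC).2 ⟨hoi, hM⟩
    have hlt : ∀ p ∈ C, i < p.2 := fun p hp => hB _ (hM.snd_mem hp)
    rw [hτ.avoids_insert_iff hM.bijOn_snd.injOn hlt hoi, hins.respectsNesting_insert_iff hlt]
    tauto
  · have hins : ¬ IsMatchingBetween A (insert i B) (insert (o, i) C) := fun h =>
      have ho : o ∈ A := h.fst_mem (Finset.mem_insert_self (o, i) C)
      hM ⟨ho, (IsMatchingBetween.insert_iff ho hi hC).1 h⟩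
    tauto

theorem notMem_of_mem_constrainedMatchings (hC : C ∈ constrainedMatchings τ A B R)
    (hi : i ∉ B) : (o, i) ∉ C :=
  fun h => hi ((mem_constrainedMatchings.1 hC).1.snd_mem h)

theorem constrainedMatchings_insert (hτ : IsClosingRule τ forced) (hB : ∀ b ∈ B, i < b) :
    constrainedMatchings τ A (insert i B) R =
      ((closable A R).filter (· < i)).biUnion fun o =>
        (constrainedMatchings τ (A.erase o) B (R ⊔ forced i o)).image (insert (o, i)) := by
  have hi : i ∉ B := fun h => (hB i h).false
  ext C
  simp only [Finset.mem_biUnion, Finset.mem_filter, Finset.mem_image]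
  constructor
  · intro hC
    obtain ⟨o, ho⟩ := (mem_constrainedMatchings.1 hC).1.exists_mem_of_closer
      (Finset.mem_insert_self i B)
    rw [← Finset.insert_erase ho,
      insert_mem_constrainedMatchings_iff hτ hB (Finset.notMem_erase _ _)] at hC
    exact ⟨o, hC.1, _, hC.2, Finset.insert_erase ho⟩
  · rintro ⟨o, ho, C', hC', rfl⟩
    exact (insert_mem_constrainedMatchings_iff hτ hB
      (notMem_of_mem_constrainedMatchings hC' hi)).2 ⟨ho, hC'⟩

theorem card_constrainedMatchings_insert (hτ : IsClosingRule τ forced) (hB : ∀ b ∈ B, i < b) :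
    (constrainedMatchings τ A (insert i B) R).card =
      ∑ o ∈ (closable A R).filter (· < i),
        (constrainedMatchings τ (A.erase o) B (R ⊔ forced i o)).card := by
  have hi : i ∉ B := fun h => (hB i h).false
  rw [constrainedMatchings_insert hτ hB, Finset.card_biUnion]
  · refine Finset.sum_congr rfl fun o _ => Finset.card_image_of_injOn fun C₁ h₁ C₂ h₂ h => ?_
    rw [← Finset.erase_insert (notMem_of_mem_constrainedMatchings (o := o) h₁ hi), h,
      Finset.erase_insert (notMem_of_mem_constrainedMatchings h₂ hi)]
  · refine fun o _ o' _ hne => Finset.disjoint_left.2 fun C hC hC' => hne ?_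
    obtain ⟨C₁, -, rfl⟩ := Finset.mem_image.1 hC
    obtain ⟨C₂, hC₂, h⟩ := Finset.mem_image.1 hC'
    have hmem : (o, i) ∈ insert (o', i) C₂ := h ▸ Finset.mem_insert_self _ _
    simpa [notMem_of_mem_constrainedMatchings hC₂ hi] using hmem

end ConstrainedMatchings

/-! ### Completions of a partial matching -/

/-- The positions of the letter `b` in the word `w`, the first letter having position `i`. -/
def positions (b : Bool) : ℕ → List Bool → Finset ℕ
  | _, [] => ∅
  | i, c :: w => if c = b then insert i (positions b (i + 1) w) else positions b (i + 1) w

/-- The ways to complete a partial matching with pending openers `O` and nesting constraints `R`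
when the steps of the word `w` (`true` for openers, `false` for closers) remain, starting at
position `i`. -/
noncomputable def completions {k : ℕ} (τ : Equiv.Perm (Fin k)) (i : ℕ) (O : Finset ℕ)
    (R : ℕ → ℕ → Prop) (w : List Bool) : Finset (Finset (ℕ × ℕ)) :=
  constrainedMatchings τ (O ∪ positions true i w) (positions false i w) R

/-- The pending openers `O` and the nesting constraints `R` only involve positions before `i`. -/
structure IsPending (i : ℕ) (O : Finset ℕ) (R : ℕ → ℕ → Prop) : Prop where
  lt : ∀ o ∈ O, o < i
  lt_and_lt : ∀ {x y}, R x y → x < y ∧ y < i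

theorem mem_positions {b : Bool} {i : ℕ} {w : List Bool} {x : ℕ} :
    x ∈ positions b i w ↔ i ≤ x ∧ w[x - i]? = some b := by
  induction w generalizing i with
  | nil => simp [positions]
  | cons c w ih =>
    have hx : x ∈ positions b i (c :: w) ↔ x = i ∧ c = b ∨ x ∈ positions b (i + 1) w := by
      rw [positions]
      split <;> simp_all
    rw [hx, ih]
    rcases lt_trichotomy x i with h | rfl | h
    · lia
    · simp
    · have : x - i = x - (i + 1) + 1 := by lia
      simp [this, h.ne', Nat.succ_le_of_lt h, h.le]

theorem le_of_mem_positions {b : Bool} {i : ℕ} {w : List Bool} {x : ℕ}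
    (hx : x ∈ positions b i w) : i ≤ x :=
  (mem_positions.1 hx).1

theorem matchAvoids_empty {k : ℕ} [NeZero k] (τ : Equiv.Perm (Fin k)) : MatchAvoids τ ∅ :=
  fun ⟨_, _, h⟩ => Finset.notMem_empty _ (h 0)

section Completions

variable {k : ℕ} {τ : Equiv.Perm (Fin k)} {forced : ℕ → ℕ → ℕ → ℕ → Prop} {i o : ℕ} {O : Finset ℕ}
  {R : ℕ → ℕ → Prop}

theorem IsPending.opener (h : IsPending i O R) : IsPending (i + 1) (insert i O) R where
  lt x hx := (Finset.mem_insert.1 hx).elim (fun hx => hx ▸ i.lt_succ_self)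
    fun hx => (h.lt x hx).trans i.lt_succ_self
  lt_and_lt hR := ⟨(h.lt_and_lt hR).1, (h.lt_and_lt hR).2.trans i.lt_succ_self⟩

theorem IsPending.closer (h : IsPending i O R) (hτ : IsClosingRule τ forced) (ho : o ∈ O) :
    IsPending (i + 1) (O.erase o) (R ⊔ forced i o) where
  lt x hx := (h.lt x (Finset.mem_of_mem_erase hx)).trans i.lt_succ_self
  lt_and_lt hR := by
    have := hR.elim h.lt_and_lt (hτ.lt_and_lt (h.lt o ho))
    exact ⟨this.1, this.2.trans i.lt_succ_self⟩

theorem IsPending.filter_closable_union_positions (h : IsPending i O R) (w : List Bool) :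
    (closable (O ∪ positions true (i + 1) w) R).filter (· < i) = closable O R := by
  ext x
  simp only [Finset.mem_filter, mem_closable, Finset.mem_union]
  constructor
  · rintro ⟨⟨hx | hx, hR⟩, hxi⟩
    · exact ⟨hx, fun y hy => hR y (Or.inl hy)⟩
    · exact absurd (le_of_mem_positions hx) (by lia)
  · rintro ⟨hx, hR⟩
    refine ⟨⟨Or.inl hx, fun y hy hxy => ?_⟩, h.lt x hx⟩
    exact hy.elim (hR y · hxy) fun hy =>
      absurd (le_of_mem_positions hy) (by have := h.lt_and_lt hxy; lia)

theorem card_completions_nil [NeZero k] :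
    (completions τ i O R []).card = if O.card = 0 then 1 else 0 := by
  have hmem (C : Finset (ℕ × ℕ)) : C ∈ completions τ i O R [] ↔ O = ∅ ∧ C = ∅ := by
    simp only [completions, positions, Finset.union_empty, mem_constrainedMatchings]
    constructor
    · rintro ⟨h, -⟩
      have hC : C = ∅ := by simpa using h.bijOn_snd.image_eq
      exact ⟨by simpa [hC, eq_comm] using h.image_fst, hC⟩
    · rintro ⟨rfl, rfl⟩
      exact ⟨⟨by simp, by simp, by simp⟩, matchAvoids_empty τ, fun _ _ _ _ _ h => by simp at h⟩
  split_ifs with hO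
  · rw [Finset.card_eq_one]
    exact ⟨∅, Finset.ext fun C => by rw [hmem, Finset.mem_singleton, ← Finset.card_eq_zero]; tauto⟩
  · rw [Finset.card_eq_zero, Finset.eq_empty_iff_forall_notMem]
    exact fun C hC => hO (Finset.card_eq_zero.2 ((hmem C).1 hC).1)

theorem completions_true (w : List Bool) :
    completions τ i O R (true :: w) = completions τ (i + 1) (insert i O) R w := by
  simp [completions, positions]

theorem card_completions_false (hτ : IsClosingRule τ forced) (h : IsPending i O R)
    (w : List Bool) : (completions τ i O R (false :: w)).card =
      ∑ o ∈ closable O R, (completions τ (i + 1) (O.erase o) (R ⊔ forced i o) w).card := by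
  have hcons : completions τ i O R (false :: w) = constrainedMatchings τ
      (O ∪ positions true (i + 1) w) (insert i (positions false (i + 1) w)) R := by
    simp [completions, positions]
  rw [hcons, card_constrainedMatchings_insert hτ fun b hb => le_of_mem_positions hb,
    h.filter_closable_union_positions]
  refine Finset.sum_congr rfl fun o ho => ?_
  have hoi : o < i := h.lt o (closable_subset O R ho)
  rw [completions, Finset.erase_union_distrib,
    Finset.erase_eq_of_notMem (s := positions true (i + 1) w) fun hmem =>
      absurd (le_of_mem_positions hmem) (by lia)]

end Completions

/-! ### The weighting principle -/

section Weighting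

open Polynomial Polynomial.Chebyshev

/-- The functional sending the weight of a state with `h` pending openers to the number of its
completions along the word `w`. Weights are monic of degree `h`, so that the coefficient in the
last case equals `1`; it is there to make the recursion linear. -/
noncomputable def wordFunctional : ℕ → List Bool → ℤ[X] →ₗ[ℤ] ℤ
  | h, [] => if h = 0 then lcoeff ℤ 0 else 0
  | h, true :: w => wordFunctional (h + 1) w ∘ₗ LinearMap.mulLeft ℤ X
  | h, false :: w => wordFunctional (h - 1) w ∘ₗ
      (LinearMap.mulLeft ℤ X - (lcoeff ℤ h).smulRight (S ℤ (h + 1)))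

/-- `W O R P` assigns the weight `P` to the state with pending openers `O` and nesting
constraints `R`, compatibly with the reading of openers and closers. -/
structure IsWeighting (forced : ℕ → ℕ → ℕ → ℕ → Prop)
    (W : Finset ℕ → (ℕ → ℕ → Prop) → ℤ[X] → Prop) : Prop where
  isMonicOfDegree : ∀ {O R P}, W O R P → IsMonicOfDegree P O.card
  opener : ∀ {i O R P}, IsPending i O R → W O R P → W (insert i O) R (X * P)
  closer : ∀ {i O R P}, IsPending i O R → W O R P → ∃ Q : ℕ → ℤ[X],
    (∀ o ∈ closable O R, W (O.erase o) (R ⊔ forced i o) (Q o)) ∧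
      ∑ o ∈ closable O R, Q o = X * P - S ℤ (O.card + 1)

theorem card_completions_eq_wordFunctional {k : ℕ} [NeZero k] {τ : Equiv.Perm (Fin k)}
    {forced : ℕ → ℕ → ℕ → ℕ → Prop} {W : Finset ℕ → (ℕ → ℕ → Prop) → ℤ[X] → Prop}
    (hτ : IsClosingRule τ forced) (hW : IsWeighting forced W) {i : ℕ} {O : Finset ℕ}
    {R : ℕ → ℕ → Prop} {P : ℤ[X]} (h : IsPending i O R) (hP : W O R P) (w : List Bool) :
    ((completions τ i O R w).card : ℤ) = wordFunctional O.card w P := by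
  have hcoeff {O R P} (hP : W O R P) : P.coeff O.card = 1 :=
    ((isMonicOfDegree_iff P _).1 (hW.isMonicOfDegree hP)).2
  induction w generalizing i O R P with
  | nil =>
    rw [card_completions_nil]
    have := hcoeff hP
    split_ifs with hO <;> simp_all [wordFunctional]
  | cons b w ih => cases b with
    | true =>
      have hi : i ∉ O := fun hi => (h.lt i hi).false
      rw [completions_true, ih h.opener (hW.opener h hP), Finset.card_insert_of_notMem hi]
      rfl
    | false =>
      obtain ⟨Q, hQ, hsum⟩ := hW.closer h hP
      have ih' : ∀ o ∈ closable O R,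
          ((completions τ (i + 1) (O.erase o) (R ⊔ forced i o) w).card : ℤ) =
            wordFunctional (O.card - 1) w (Q o) := fun o ho => by
        have hoO := closable_subset O R ho
        rw [ih (h.closer hτ hoO) (hQ o ho), Finset.card_erase_of_mem hoO]
      rw [card_completions_false hτ h, Nat.cast_sum, Finset.sum_congr rfl ih', ← map_sum, hsum]
      simp [wordFunctional, hcoeff hP]

end Weighting

/-! ### Nested blocks of pending openers -/

/-- Any two openers in `B` have to be nested. -/
def IsNested (R : ℕ → ℕ → Prop) (B : Finset ℕ) : Prop :=
  ∀ x ∈ B, ∀ y ∈ B, x < y → R x y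

section Nested

open Polynomial.Chebyshev

variable {R R' : ℕ → ℕ → Prop} {A B O O' : Finset ℕ} {i o : ℕ}

theorem IsNested.mono (h : IsNested R B) (hRR' : R ≤ R') (hAB : A ⊆ B) : IsNested R' A :=
  fun x hx y hy hxy => hRR' x y (h x (hAB hx) y (hAB hy) hxy)

theorem IsNested.le_of_mem_closable (h : IsNested R B) (ho : o ∈ closable B R) :
    ∀ x ∈ B, x ≤ o := fun x hx =>
  have ho' := mem_closable.1 ho
  not_lt.1 fun hlt => ho'.2 x hx (h o ho'.1 x hx hlt)

theorem IsPending.mono (h : IsPending i O R) (hO : O' ⊆ O) : IsPending i O' R :=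
  ⟨fun o ho => h.lt o (hO ho), h.lt_and_lt⟩

theorem IsNested.closable_eq_singleton_max' (h : IsNested R B) (hR : ∀ ⦃x y⦄, R x y → x < y)
    (hB : B.Nonempty) : closable B R = {B.max' hB} := by
  ext o
  rw [Finset.mem_singleton]
  constructor
  · intro ho
    exact ((B.le_max' o (closable_subset B R ho)).antisymm
      (B.max'_le hB o (h.le_of_mem_closable ho)))
  · rintro rfl
    exact mem_closable.2 ⟨B.max'_mem hB, fun y hy hmax => (B.le_max' y hy).not_gt (hR hmax)⟩

-- This includes the empty block, since `S ℤ (-1) = 0`.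
theorem IsNested.sum_closable_chebyshevS (h : IsNested R B) (hR : ∀ ⦃x y⦄, R x y → x < y) :
    ∑ _o ∈ closable B R, S ℤ (B.card - 1) = S ℤ (B.card - 1) := by
  rcases B.eq_empty_or_nonempty with rfl | hB
  · simp
  · rw [h.closable_eq_singleton_max' hR hB, Finset.sum_singleton]

theorem closable_union (h : ∀ x ∈ A, ∀ y ∈ B, ¬ R x y ∧ ¬ R y x) :
    closable (A ∪ B) R = closable A R ∪ closable B R := by
  ext o
  simp only [mem_closable, Finset.mem_union]
  grind

end Nested

/-! ### The pattern 321 -/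

section Pattern321

open Polynomial Polynomial.Chebyshev

/-- The pairs of openers that have to be nested in a `321`-avoiding matching, once the opener `o`
is closed at `i`. -/
def forced321 (i o x y : ℕ) : Prop :=
  o < x ∧ x < y ∧ y < i

/-- The pending openers `O` are the union of nested blocks, each to the left of the next one and
not nested with it, and `P` is the product of the polynomials `S ℤ b` over the sizes `b` of the
blocks. -/
inductive IsBlockWeight (R : ℕ → ℕ → Prop) : Finset ℕ → ℤ[X] → Prop
  | empty : IsBlockWeight R ∅ 1
  | cons {B O P} : IsNested R B → (∀ x ∈ B, ∀ y ∈ O, x < y ∧ ¬ R x y) → IsBlockWeight R O P →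
      IsBlockWeight R (B ∪ O) (S ℤ B.card * P)

namespace IsBlockWeight

variable {R : ℕ → ℕ → Prop} {B O : Finset ℕ} {P : ℤ[X]} {i o : ℕ}

theorem of_isNested (hB : IsNested R B) : IsBlockWeight R B (S ℤ B.card) := by
  simpa using cons hB (by simp) empty

theorem isMonicOfDegree (h : IsBlockWeight R O P) : IsMonicOfDegree P O.card := by
  induction h with
  | empty => simp
  | @cons B O P _ hBO _ ih =>
    have hdisj : Disjoint B O := Finset.disjoint_iff_ne.2 fun x hx y hy => (hBO x hx y hy).1.ne
    rw [Finset.card_union_of_disjoint hdisj]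
    exact (isMonicOfDegree_chebyshevS ℤ B.card).mul ih

theorem opener (h : IsBlockWeight R O P) (hO : IsPending i O R) :
    IsBlockWeight R (insert i O) (X * P) := by
  induction h with
  | empty => simpa using of_isNested (R := R) (B := {i}) (by simp [IsNested])
  | @cons B O P hB hBO _ ih =>
    have hBi : ∀ x ∈ B, ∀ y ∈ insert i O, x < y ∧ ¬ R x y := by
      intro x hx y hy
      rcases Finset.mem_insert.1 hy with rfl | hy
      · exact ⟨hO.lt x (Finset.mem_union_left O hx), fun hR => (hO.lt_and_lt hR).2.false⟩
      · exact hBO x hx y hy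
    have := cons hB hBi (ih (hO.mono Finset.subset_union_right))
    rwa [Finset.union_insert, mul_left_comm] at this

theorem closer_of_mem_block (hO : IsPending i (B ∪ O) R) (hB : IsNested R B)
    (hBO : ∀ x ∈ B, ∀ y ∈ O, x < y ∧ ¬ R x y) (ho : o ∈ closable B R) :
    IsBlockWeight (R ⊔ forced321 i o) ((B ∪ O).erase o) (S ℤ (B.card - 1) * S ℤ O.card) := by
  have hoB : o ∈ B := closable_subset B R ho
  have hoO : o ∉ O := fun hoO => (hBO o hoB o hoO).1.false
  have hO' : IsNested (R ⊔ forced321 i o) O := fun x hx y hy hxy =>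
    Or.inr ⟨(hBO o hoB x hx).1, hxy, hO.lt y (Finset.mem_union_right B hy)⟩
  have hB' : ∀ x ∈ B.erase o, ∀ y ∈ O, x < y ∧ ¬ (R ⊔ forced321 i o) x y := fun x hx y hy =>
    have hxB := Finset.mem_of_mem_erase hx
    ⟨(hBO x hxB y hy).1, fun hR => hR.elim (hBO x hxB y hy).2 fun hf =>
      hf.1.not_ge (hB.le_of_mem_closable ho x hxB)⟩
  rw [Finset.erase_union_distrib, Finset.erase_eq_of_notMem hoO,
    ← Finset.cast_card_erase_of_mem hoB]
  exact cons (hB.mono le_sup_left (B.erase_subset o)) hB' (of_isNested hO')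

theorem closer_of_mem_later_block {Q : ℤ[X]} (hB : IsNested R B)
    (hBO : ∀ x ∈ B, ∀ y ∈ O, x < y ∧ ¬ R x y) (ho : o ∈ O)
    (hQ : IsBlockWeight (R ⊔ forced321 i o) (O.erase o) Q) :
    IsBlockWeight (R ⊔ forced321 i o) ((B ∪ O).erase o) (S ℤ B.card * Q) := by
  have hoB : o ∉ B := fun hoB => (hBO o hoB o ho).1.false
  rw [Finset.erase_union_distrib, Finset.erase_eq_of_notMem hoB]
  refine cons (hB.mono le_sup_left subset_rfl) (fun x hx y hy => ?_) hQ
  have hxy := hBO x hx y (Finset.mem_of_mem_erase hy)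
  exact ⟨hxy.1, fun hR => hR.elim hxy.2 fun hf => hf.1.not_gt (hBO x hx o ho).1⟩

theorem closer (h : IsBlockWeight R O P) (hO : IsPending i O R) : ∃ Q : ℕ → ℤ[X],
    (∀ o ∈ closable O R, IsBlockWeight (R ⊔ forced321 i o) (O.erase o) (Q o)) ∧
      ∑ o ∈ closable O R, Q o = X * P - S ℤ (O.card + 1) := by
  induction h with
  | empty => exact ⟨0, by simp [closable]⟩
  | @cons B O P hB hBO _ ih =>
    obtain ⟨Q, hQ, hsum⟩ := ih (hO.mono Finset.subset_union_right)
    have hdisj : Disjoint B O := Finset.disjoint_iff_ne.2 fun x hx y hy => (hBO x hx y hy).1.ne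
    have hclosable : closable (B ∪ O) R = closable B R ∪ closable O R :=
      closable_union fun x hx y hy =>
        ⟨(hBO x hx y hy).2, fun hR => (hO.lt_and_lt hR).1.not_gt (hBO x hx y hy).1⟩
    refine ⟨fun o => if o ∈ B then S ℤ (B.card - 1) * S ℤ O.card else S ℤ B.card * Q o,
      fun o ho => ?_, ?_⟩
    · rcases Finset.mem_union.1 (hclosable ▸ ho) with ho | ho
      · simpa only [if_pos (closable_subset B R ho)] using closer_of_mem_block hO hB hBO ho
      · have hoO := closable_subset O R ho
        simpa only [if_neg (Finset.disjoint_right.1 hdisj hoO)] using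
          closer_of_mem_later_block hB hBO hoO (hQ o ho)
    · have hsumB : ∑ _o ∈ closable B R, S ℤ (B.card - 1) * S ℤ O.card =
          S ℤ (B.card - 1) * S ℤ O.card := by
        rw [← Finset.sum_mul, hB.sum_closable_chebyshevS fun _ _ hR => (hO.lt_and_lt hR).1]
      rw [hclosable, Finset.sum_union (hdisj.mono (closable_subset B R) (closable_subset O R)),
        Finset.sum_congr rfl fun o ho => if_pos (closable_subset B R ho),
        Finset.sum_congr rfl fun o ho =>
          if_neg (Finset.disjoint_right.1 hdisj (closable_subset O R ho)),
        hsumB, ← Finset.mul_sum, hsum, Finset.card_union_of_disjoint hdisj]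
      push_cast
      linear_combination -chebyshevS_mul_chebyshevS_add_one ℤ B.card O.card

theorem isWeighting : IsWeighting forced321 fun O R P => IsBlockWeight R O P where
  isMonicOfDegree := isMonicOfDegree
  opener hO h := h.opener hO
  closer hO h := h.closer hO

end IsBlockWeight

theorem matchAvoids_p321_iff_s2 {M : Finset (ℕ × ℕ)} : MatchAvoids p321 M ↔
    ∀ a b c a' b' c', (a, a') ∈ M → (b, b') ∈ M → (c, c') ∈ M →
      ¬ (a < b ∧ b < c ∧ c < a' ∧ a' < b' ∧ b' < c') := by
  constructor
  · rintro h a b c a' b' c' ha hb hc ⟨hab, hbc, hca', hab', hbc'⟩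
    refine h ⟨![a, b, c, a', b', c'], Fin.strictMono_iff_lt_succ.2 fun j => ?_, fun j => ?_⟩
    · fin_cases j <;> assumption
    · fin_cases j <;> assumption
  · rintro h ⟨f, hf, hp⟩
    refine h _ _ _ _ _ _ (hp 0) (hp 1) (hp 2) ⟨?_, ?_, ?_, ?_, ?_⟩ <;> apply hf <;> decide

theorem isClosingRule_p321 : IsClosingRule p321 forced321 where
  lt_and_lt _ h := h.2
  avoids_insert_iff {C o i} hinj hlt hoi := by
    simp only [matchAvoids_p321_iff_s2]
    constructor
    · refine fun h => ⟨fun a b c a' b' c' ha hb hc => h a b c a' b' c' (by simp [ha])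
        (by simp [hb]) (by simp [hc]), fun x y x' y' hxy hx hy => ?_⟩
      have hne : x' ≠ y' := fun heq => hxy.2.1.ne (congrArg Prod.fst (hinj hx hy heq))
      have hix : i < x' := hlt _ hx
      have := h o x y i x' y' (by simp) (by simp [hx]) (by simp [hy])
      grind [forced321]
    · rintro ⟨hC, hR⟩ a b c a' b' c' ha hb hc ⟨hab, hbc, hca', hab', hbc'⟩
      have hi {x x' : ℕ} (hx : (x, x') ∈ insert (o, i) C) : x = o ∧ x' = i ∨ (x, x') ∈ C := by
        simpa using hx
      have ha' : i ≤ a' := (hi ha).elim (fun h => h.2.ge) fun h => (hlt _ h).le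
      have hbC : (b, b') ∈ C := (hi hb).resolve_left (by lia)
      have hcC : (c, c') ∈ C := (hi hc).resolve_left (by lia)
      rcases hi ha with ⟨rfl, rfl⟩ | haC
      · exact (hR ⟨hab, hbc, hca'⟩ hbC hcC).not_gt hbc'
      · exact hC a b c a' b' c' haC hbC hcC ⟨hab, hbc, hca', hab', hbc'⟩

end Pattern321

/-! ### The pattern 213 -/

section Pattern213

open Polynomial Polynomial.Chebyshev

/-- The pairs of openers that have to be nested in a `213`-avoiding matching, once the opener `o`
is closed; the position of the closer does not matter. -/
def forced213 (_i o x y : ℕ) : Prop :=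
  x < y ∧ y < o

/-- The pending openers `O` consist of a nested block of size `b` followed by `j` openers that are
not nested with the earlier ones, and `P = X ^ j * S ℤ b`. -/
inductive IsInitialBlockWeight (R : ℕ → ℕ → Prop) : Finset ℕ → ℤ[X] → Prop
  | block {B} : IsNested R B → IsInitialBlockWeight R B (S ℤ B.card)
  | snoc {a O P} : (∀ x ∈ O, x < a ∧ ¬ R x a) → IsInitialBlockWeight R O P →
      IsInitialBlockWeight R (insert a O) (X * P)

namespace IsInitialBlockWeight

variable {R : ℕ → ℕ → Prop} {O : Finset ℕ} {P : ℤ[X]} {i a o : ℕ}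

theorem isMonicOfDegree (h : IsInitialBlockWeight R O P) : IsMonicOfDegree P O.card := by
  induction h with
  | @block B _ => exact isMonicOfDegree_chebyshevS ℤ B.card
  | @snoc a O P hOa _ ih =>
    have ha : a ∉ O := fun ha => (hOa a ha).1.false
    rw [Finset.card_insert_of_notMem ha, add_comm]
    exact (isMonicOfDegree_X ℤ).mul ih

theorem opener (h : IsInitialBlockWeight R O P) (hO : IsPending i O R) :
    IsInitialBlockWeight R (insert i O) (X * P) :=
  snoc (fun x hx => ⟨hO.lt x hx, fun hR => (hO.lt_and_lt hR).2.false⟩) h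

theorem closer_last (hO : ∀ x ∈ O, x < a) :
    IsInitialBlockWeight (R ⊔ forced213 i a) ((insert a O).erase a) (S ℤ O.card) := by
  rw [Finset.erase_insert fun ha => (hO a ha).false]
  exact block fun x _ y hy hxy => Or.inr ⟨hxy, hO y hy⟩

theorem closer_of_mem {Q : ℤ[X]} (hO : ∀ x ∈ O, x < a ∧ ¬ R x a) (ho : o ∈ O)
    (hQ : IsInitialBlockWeight (R ⊔ forced213 i o) (O.erase o) Q) :
    IsInitialBlockWeight (R ⊔ forced213 i o) ((insert a O).erase o) (X * Q) := by
  rw [Finset.erase_insert_of_ne (hO o ho).1.ne']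
  refine snoc (fun x hx => ?_) hQ
  have hxa := hO x (Finset.mem_of_mem_erase hx)
  exact ⟨hxa.1, fun hR => hR.elim hxa.2 fun hf => hf.2.not_gt (hO o ho).1⟩

theorem closer (h : IsInitialBlockWeight R O P) (hO : IsPending i O R) : ∃ Q : ℕ → ℤ[X],
    (∀ o ∈ closable O R, IsInitialBlockWeight (R ⊔ forced213 i o) (O.erase o) (Q o)) ∧
      ∑ o ∈ closable O R, Q o = X * P - S ℤ (O.card + 1) := by
  induction h with
  | @block B hB =>
    refine ⟨fun _ => S ℤ (B.card - 1), fun o ho => ?_, ?_⟩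
    · rw [← Finset.cast_card_erase_of_mem (closable_subset B R ho)]
      exact block (hB.mono le_sup_left (B.erase_subset o))
    · rw [hB.sum_closable_chebyshevS fun _ _ hR => (hO.lt_and_lt hR).1, S_add_one]
      ring
  | @snoc a O P hOa _ ih =>
    obtain ⟨Q, hQ, hsum⟩ := ih (hO.mono (Finset.subset_insert a O))
    have ha : a ∉ O := fun ha => (hOa a ha).1.false
    have hclosable : closable (insert a O) R = insert a (closable O R) := by
      ext o
      have := fun y (hR : R a y) => (hO.lt_and_lt hR).1
      grind [mem_closable]
    refine ⟨fun o => if o = a then S ℤ O.card else X * Q o, fun o ho => ?_, ?_⟩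
    · rcases Finset.mem_insert.1 (hclosable ▸ ho) with rfl | ho
      · simpa only [if_pos] using closer_last fun x hx => (hOa x hx).1
      · have hoO := closable_subset O R ho
        simpa only [if_neg (hOa o hoO).1.ne] using closer_of_mem hOa hoO (hQ o ho)
    · rw [hclosable, Finset.sum_insert fun h => ha (closable_subset O R h), if_pos rfl,
        Finset.sum_congr rfl fun o ho => if_neg (hOa o (closable_subset O R ho)).1.ne,
        ← Finset.mul_sum, hsum, Finset.card_insert_of_notMem ha]
      push_cast
      rw [add_assoc, one_add_one_eq_two, S_add_two]
      ring

theorem isWeighting : IsWeighting forced213 fun O R P => IsInitialBlockWeight R O P where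
  isMonicOfDegree := isMonicOfDegree
  opener hO h := h.opener hO
  closer hO h := h.closer hO

end IsInitialBlockWeight

theorem matchAvoids_p213_iff {M : Finset (ℕ × ℕ)} : MatchAvoids p213 M ↔
    ∀ a b c a' b' c', (a, a') ∈ M → (b, b') ∈ M → (c, c') ∈ M →
      ¬ (a < b ∧ b < c ∧ c < c' ∧ c' < a' ∧ a' < b') := by
  constructor
  · rintro h a b c a' b' c' ha hb hc ⟨hab, hbc, hcc', hca', hab'⟩
    refine h ⟨![a, b, c, c', a', b'], Fin.strictMono_iff_lt_succ.2 fun j => ?_, fun j => ?_⟩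
    · fin_cases j <;> assumption
    · fin_cases j <;> assumption
  · rintro h ⟨f, hf, hp⟩
    refine h _ _ _ _ _ _ (hp 0) (hp 1) (hp 2) ⟨?_, ?_, ?_, ?_, ?_⟩ <;> apply hf <;> decide

theorem isClosingRule_p213 : IsClosingRule p213 forced213 where
  lt_and_lt hoi h := ⟨h.1, h.2.trans hoi⟩
  avoids_insert_iff {C o i} hinj hlt hoi := by
    simp only [matchAvoids_p213_iff]
    constructor
    · refine fun h => ⟨fun a b c a' b' c' ha hb hc => h a b c a' b' c' (by simp [ha])
        (by simp [hb]) (by simp [hc]), fun x y x' y' hxy hx hy => ?_⟩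
      have hne : x' ≠ y' := fun heq => hxy.1.ne (congrArg Prod.fst (hinj hx hy heq))
      have hix : i < x' := hlt _ hx
      have := h x y o x' y' i (by simp [hx]) (by simp [hy]) (by simp)
      grind [forced213]
    · rintro ⟨hC, hR⟩ a b c a' b' c' ha hb hc ⟨hab, hbc, hcc', hca', hab'⟩
      have hi {x x' : ℕ} (hx : (x, x') ∈ insert (o, i) C) : x = o ∧ x' = i ∨ (x, x') ∈ C := by
        simpa using hx
      have hc' : i ≤ c' := (hi hc).elim (fun h => h.2.ge) fun h => (hlt _ h).le
      have haC : (a, a') ∈ C := (hi ha).resolve_left (by lia)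
      have hbC : (b, b') ∈ C := (hi hb).resolve_left (by lia)
      rcases hi hc with ⟨rfl, rfl⟩ | hcC
      · exact (hR ⟨hab, hbc⟩ haC hbC).not_gt hab'
      · exact hC a b c a' b' c' haC hbC hcC ⟨hab, hbc, hcc', hca', hab'⟩

end Pattern213

theorem card_completions_p321_eq_card_completions_p213 (i : ℕ) (w : List Bool) :
    (completions p321 i ∅ ⊥ w).card = (completions p213 i ∅ ⊥ w).card := by
  have hpending : IsPending i ∅ ⊥ := ⟨by simp, False.elim⟩
  have h₃₂₁ := card_completions_eq_wordFunctional isClosingRule_p321 IsBlockWeight.isWeighting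
    hpending .empty w
  have h₂₁₃ := card_completions_eq_wordFunctional isClosingRule_p213
    IsInitialBlockWeight.isWeighting hpending (.block (B := ∅) (by simp [IsNested])) w
  simp only [Finset.card_empty, Nat.cast_zero, Polynomial.Chebyshev.S_zero] at h₃₂₁ h₂₁₃
  exact_mod_cast h₃₂₁.trans h₂₁₃.symm

/-! ### Perfect matchings of a given shape -/

section PerfectMatchings

variable {n : ℕ} {M : Finset (ℕ × ℕ)} {A B : Finset ℕ} {t : List Bool}

theorem IsPerfectMatching.eq_of_common_endpoint (h : IsPerfectMatching n M) {p q : ℕ × ℕ} {x : ℕ}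
    (hp : p ∈ M) (hq : q ∈ M) (hpx : p.1 = x ∨ p.2 = x) (hqx : q.1 = x ∨ q.2 = x) : p = q :=
  have hpM := h.1 p hp
  (h.2 x (by lia) (by lia)).unique ⟨hp, hpx⟩ ⟨hq, hqx⟩

theorem IsPerfectMatching.isMatchingBetween (h : IsPerfectMatching n M) (hAB : Disjoint A B)
    (hU : A ∪ B = Finset.Icc 1 (2 * n)) (hA : M.image Prod.fst = A) :
    IsMatchingBetween A B M := by
  have hB : M.image Prod.snd = B := by
    ext x
    rw [Finset.mem_image]
    constructor
    · rintro ⟨p, hp, rfl⟩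
      have hpM := h.1 p hp
      have hpU : p.2 ∈ A ∪ B := hU ▸ Finset.mem_Icc.2 (by lia)
      refine (Finset.mem_union.1 hpU).resolve_left fun hpA => ?_
      obtain ⟨q, hq, hqp⟩ := Finset.mem_image.1 (hA ▸ hpA)
      have := h.eq_of_common_endpoint hp hq (Or.inr rfl) (Or.inl hqp)
      grind
    · intro hx
      have hxU := Finset.mem_Icc.1 (hU ▸ Finset.mem_union_right A hx)
      obtain ⟨p, ⟨hp, hpx | hpx⟩, -⟩ := h.2 x hxU.1 hxU.2
      · have hxA : x ∈ A := hA ▸ Finset.mem_image.2 ⟨p, hp, hpx⟩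
        exact absurd hx (Finset.disjoint_left.1 hAB hxA)
      · exact ⟨p, hp, hpx⟩
  have hfst : Set.InjOn Prod.fst (M : Set (ℕ × ℕ)) := fun p hp q hq hpq =>
    h.eq_of_common_endpoint hp hq (Or.inl hpq) (Or.inl rfl)
  have hsnd : Set.InjOn Prod.snd (M : Set (ℕ × ℕ)) := fun p hp q hq hpq =>
    h.eq_of_common_endpoint hp hq (Or.inr hpq) (Or.inr rfl)
  rw [← hA, ← hB]
  exact ⟨by simpa using hfst.bijOn_image, by simpa using hsnd.bijOn_image,
    fun p hp => (h.1 p hp).1⟩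

theorem IsMatchingBetween.isPerfectMatching (h : IsMatchingBetween A B M) (hAB : Disjoint A B)
    (hU : A ∪ B = Finset.Icc 1 (2 * n)) : IsPerfectMatching n M := by
  have hne : ∀ p ∈ M, ∀ q ∈ M, p.1 ≠ q.2 := fun p hp q hq hpq =>
    Finset.disjoint_left.1 hAB (h.fst_mem hp) (hpq ▸ h.snd_mem hq)
  refine ⟨fun p hp => ?_, fun x hx₁ hx₂ => ?_⟩
  · have h₁ := Finset.mem_Icc.1 (hU ▸ Finset.mem_union_left B (h.fst_mem hp))
    have h₂ := Finset.mem_Icc.1 (hU ▸ Finset.mem_union_right A (h.snd_mem hp))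
    exact ⟨h.fst_lt_snd p hp, h₁.1, h₂.2⟩
  · have hxU : x ∈ A ∪ B := hU ▸ Finset.mem_Icc.2 ⟨hx₁, hx₂⟩
    rcases Finset.mem_union.1 hxU with hx | hx
    · obtain ⟨y, hy⟩ := h.exists_mem_of_opener hx
      exact ⟨(x, y), ⟨hy, Or.inl rfl⟩, fun q hq => h.bijOn_fst.injOn hq.1 hy
        (hq.2.resolve_right (hne _ hy q hq.1).symm)⟩
    · obtain ⟨y, hy⟩ := h.exists_mem_of_closer hx
      exact ⟨(y, x), ⟨hy, Or.inr rfl⟩, fun q hq => h.bijOn_snd.injOn hq.1 hy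
        (hq.2.resolve_left (hne q hq.1 _ hy))⟩

theorem disjoint_positions (i : ℕ) (t : List Bool) :
    Disjoint (positions true i t) (positions false i t) := by
  simp only [Finset.disjoint_left, mem_positions]
  grind

theorem positions_union_positions (i : ℕ) (t : List Bool) :
    positions true i t ∪ positions false i t = Finset.Ico i (i + t.length) := by
  ext x
  simp only [Finset.mem_union, mem_positions, Finset.mem_Ico, ← and_or_left]
  refine and_congr_right fun hx => ?_
  have hlt : x - i < t.length ↔ x < i + t.length := by lia
  rw [← hlt]
  by_cases h : x - i < t.length <;> simp [h]

theorem shapeOf_eq_iff (ht : t.length = 2 * n) (hM : IsPerfectMatching n M) :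
    shapeOf n M = t ↔ M.image Prod.fst = positions true 1 t := by
  constructor
  · rintro rfl
    ext x
    have hx : x ∈ M.image Prod.fst → 1 ≤ x ∧ x ≤ 2 * n := fun hx => by
      obtain ⟨p, hp, rfl⟩ := Finset.mem_image.1 hx
      have := hM.1 p hp
      lia
    rw [mem_positions]
    by_cases hx' : 1 ≤ x ∧ x ≤ 2 * n
    · obtain ⟨k, rfl⟩ := Nat.exists_eq_add_of_le' hx'.1
      simp [shapeOf, Nat.lt_of_succ_le hx'.2]
    · refine iff_of_false (mt hx hx') fun ⟨hx₁, h⟩ => hx' ⟨hx₁, ?_⟩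
      obtain ⟨hlt, -⟩ := List.getElem?_eq_some_iff.1 h
      lia
  · intro h
    refine List.ext_getElem (by simp [shapeOf, ht]) fun k hk hk' => ?_
    have hmem : k + 1 ∈ M.image Prod.fst ↔ t[k] = true := by
      rw [h, mem_positions]
      simp [hk']
    simp only [shapeOf, List.getElem_map, List.getElem_range, hmem, Bool.decide_eq_true]

theorem setOf_matchAvoids_shapeOf_eq_completions {k : ℕ} (τ : Equiv.Perm (Fin k))
    (ht : t.length = 2 * n) :
    {M : Finset (ℕ × ℕ) | IsPerfectMatching n M ∧ MatchAvoids τ M ∧ shapeOf n M = t} =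
      completions τ 1 ∅ ⊥ t := by
  have hdisj := disjoint_positions 1 t
  have hU : positions true 1 t ∪ positions false 1 t = Finset.Icc 1 (2 * n) := by
    rw [positions_union_positions, ht]
    ext
    simp only [Finset.mem_Ico, Finset.mem_Icc]
    lia
  ext M
  rw [Finset.mem_coe, completions, mem_constrainedMatchings, Finset.empty_union,
    Set.mem_ofPred_eq]
  have hR : RespectsNesting ⊥ M := fun _ _ _ _ h => h.elim
  constructor
  · rintro ⟨hM, hτ, hshape⟩
    exact ⟨hM.isMatchingBetween hdisj hU ((shapeOf_eq_iff ht hM).1 hshape), hτ, hR⟩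
  · rintro ⟨hM, hτ, -⟩
    have hM' := hM.isPerfectMatching hdisj hU
    exact ⟨hM', hτ, (shapeOf_eq_iff ht hM').2 hM.image_fst⟩

theorem ncard_matchAvoids_p321_shapeOf_eq (n : ℕ) (t : List Bool) :
    {M : Finset (ℕ × ℕ) |
        IsPerfectMatching n M ∧ MatchAvoids p321 M ∧ shapeOf n M = t}.ncard =
      {M : Finset (ℕ × ℕ) |
        IsPerfectMatching n M ∧ MatchAvoids p213 M ∧ shapeOf n M = t}.ncard := by
  by_cases ht : t.length = 2 * n
  · rw [setOf_matchAvoids_shapeOf_eq_completions p321 ht,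
      setOf_matchAvoids_shapeOf_eq_completions p213 ht, Set.ncard_coe_finset,
      Set.ncard_coe_finset, card_completions_p321_eq_card_completions_p213]
  · have hshape (M : Finset (ℕ × ℕ)) : shapeOf n M ≠ t := by
      rintro rfl
      simp [shapeOf] at ht
    simp [hshape]

theorem finite_setOf_isPerfectMatching (n : ℕ) :
    {M : Finset (ℕ × ℕ) | IsPerfectMatching n M}.Finite := by
  refine ((Finset.Icc 1 (2 * n) ×ˢ Finset.Icc 1 (2 * n)).powerset.finite_toSet).subset
    fun M hM => Finset.mem_powerset.2 fun p hp => ?_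
  have := hM.1 p hp
  simp only [Finset.mem_product, Finset.mem_Icc]
  lia

end PerfectMatchings

/-- The patterns `321` and `213` are shape-Wilf-equivalent, and consequently
`|M_n(321)| = |M_n(213)|` for all `n`. -/
theorem shapeWilfEquivalent_321_213 :
    (∀ n : ℕ, 0 < n → ∀ t : List Bool, IsDyckPath n t →
      {M : Finset (ℕ × ℕ) |
          IsPerfectMatching n M ∧ MatchAvoids p321 M ∧ shapeOf n M = t}.ncard =
      {M : Finset (ℕ × ℕ) |
          IsPerfectMatching n M ∧ MatchAvoids p213 M ∧ shapeOf n M = t}.ncard) ∧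
    ∀ n : ℕ, mcount p321 n = mcount p213 n := by
  refine ⟨fun n _ t _ => ncard_matchAvoids_p321_shapeOf_eq n t, fun n => ?_⟩
  have hfin (τ : Equiv.Perm (Fin 3)) : {M | IsPerfectMatching n M ∧ MatchAvoids τ M}.Finite :=
    (finite_setOf_isPerfectMatching n).subset fun _ hM => hM.1
  refine ncard_eq_of_ncard_fiber_eq (hfin p321) (hfin p213) (shapeOf n) fun t => ?_
  simpa only [Set.mem_ofPred_eq, and_assoc] using ncard_matchAvoids_p321_shapeOf_eq n t
end
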